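/- arXiv:1801.02876 — 2 statements merged into one kernel-verified Lean document; each statement's English description precedes it below -/
import Mathlib

section
/- Let φ : P(X) → [0, ∞] be symmetric, concave, and lower semicontinuous, and let Q, L, ε satisfy 0 ≤ ε ≤ 1 − ∑_{x=1}^L Q↓(x). Then for every pair of random variables (X, Y) with P_X = Q and P_e^{(L)}(X|Y) ≤ ε, the generalized conditional information satisfies h_φ(X|Y) := E[φ(P_{X|Y})] ≤ φ(P₁), where P₁ is the Fano-type-1 distribution associated with (Q, L, ε). -/
noncomputable section
open scoped Classical

def IsPmf {α : Type*} (p : α → ℝ) : Prop := (∀ x, 0 ≤ p x) ∧ ∑' x, p x = 1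

def topSum (p : ℕ → ℝ) (k : ℕ) : ℝ :=
  sSup {t : ℝ | ∃ s : Finset ℕ, s.card = k ∧ t = ∑ x ∈ s, p x}

/-- `d` is the decreasing rearrangement of `p` (indexed from `1`):
`d` is nonincreasing on `{1,2,...}`, vanishes at the unused index `0`, and its
partial sums are the top-`k` sums of `p`. -/
def IsDecRearr (p d : ℕ → ℝ) : Prop :=
  d 0 = 0 ∧ (∀ i j, 1 ≤ i → i ≤ j → d j ≤ d i) ∧
    ∀ k, ∑ i ∈ Finset.Icc 1 k, d i = topSum p k

/-- The weight `V(j)` of the Fano-type-1 distribution. -/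
def fanoV (d : ℕ → ℝ) (L : ℕ) (ε : ℝ) (j : ℕ) : ℝ :=
  if j ≤ L then ((1 - ε) - ∑ i ∈ Finset.Icc 1 (j - 1), d i) / ((L : ℝ) - j + 1) else 1

/-- The weight `W(k)` of the Fano-type-1 distribution (for finite `k`). -/
def fanoW (d : ℕ → ℝ) (L : ℕ) (ε : ℝ) (k : ℕ) : ℝ :=
  if k = L then -1 else ((∑ i ∈ Finset.Icc 1 k, d i) - (1 - ε)) / ((k : ℝ) - L)

/-- `J := min{1 ≤ j < ∞ | Q↓(j) < V(j)}`. -/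
def fanoJ (d : ℕ → ℝ) (L : ℕ) (ε : ℝ) : ℕ :=
  sInf {j : ℕ | 1 ≤ j ∧ d j < fanoV d L ε j}

/-- `K₁ := sup{L ≤ k < ∞ | W(k) < Q↓(k)}`, an extended natural number. -/
def fanoK (d : ℕ → ℝ) (L : ℕ) (ε : ℝ) : ℕ∞ :=
  sSup {k : ℕ∞ | ∃ n : ℕ, k = (n : ℕ∞) ∧ L ≤ n ∧ fanoW d L ε n < d n}

/-- The Fano-type-1 distribution built from the decreasing rearrangement `d` of
`Q`, list size `L` and error level `ε` (with `W(∞) = 0`). -/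
def fanoType1 (d : ℕ → ℝ) (L : ℕ) (ε : ℝ) (x : ℕ) : ℝ :=
  if x < fanoJ d L ε then d x
  else if x ≤ L then fanoV d L ε (fanoJ d L ε)
  else if (x : ℕ∞) ≤ fanoK d L ε then
    (if fanoK d L ε = ⊤ then 0 else fanoW d L ε (fanoK d L ε).toNat)
  else d x


open Filter Topology

lemma IsPmf.hasSum {α : Type*} {p : α → ℝ} (h : IsPmf p) : HasSum p 1 := by
  have hs : Summable p := by
    by_contra hn
    have := h.2
    rw [tsum_eq_zero_of_not_summable hn] at this
    exact zero_ne_one this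
  exact h.2 ▸ hs.hasSum

lemma isPmf_of_hasSum {α : Type*} {p : α → ℝ} (h0 : ∀ x, 0 ≤ p x) (h : HasSum p 1) : IsPmf p :=
  ⟨h0, h.tsum_eq⟩

lemma isPmf_of_tendsto {p : ℕ → ℝ} (h0 : ∀ x, 0 ≤ p x)
    (h : Tendsto (fun k => ∑ i ∈ Finset.range k, p i) atTop (𝓝 1)) : IsPmf p :=
  isPmf_of_hasSum h0 ((hasSum_iff_tendsto_nat_of_nonneg h0 1).2 h)

lemma IsPmf.tendsto {p : ℕ → ℝ} (h : IsPmf p) :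
    Tendsto (fun k => ∑ i ∈ Finset.range k, p i) atTop (𝓝 1) :=
  h.hasSum.tendsto_sum_nat

lemma IsPmf.sum_le_one {α : Type*} {p : α → ℝ} (h : IsPmf p) (s : Finset α) : ∑ i ∈ s, p i ≤ 1 :=
  sum_le_hasSum s (fun i _ => h.1 i) h.hasSum

lemma IsPmf.perm {p : ℕ → ℝ} (h : IsPmf p) (σ : Equiv.Perm ℕ) : IsPmf (p ∘ σ) :=
  isPmf_of_hasSum (fun _ => h.1 _) (σ.hasSum_iff.2 h.hasSum)

lemma IsPmf.mix {p r : ℕ → ℝ} (h : IsPmf p) (h' : IsPmf r) {l : ℝ} (h0 : 0 ≤ l) (h1 : l ≤ 1) :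
    IsPmf (fun x => l * p x + (1 - l) * r x) := by
  refine isPmf_of_hasSum (fun x => ?_) ?_
  · have := h.1 x
    have := h'.1 x
    have : 0 ≤ 1 - l := by linarith
    positivity
  · have := (h.hasSum.mul_left l).add (h'.hasSum.mul_left (1 - l))
    rwa [show l * 1 + (1 - l) * 1 = 1 by ring] at this

/-- One step: finite Schur concavity by T-transforms. -/
lemma fin_schur (φ : (ℕ → ℝ) → ENNReal)
    (hsym : ∀ (p : ℕ → ℝ) (σ : Equiv.Perm ℕ), φ (p ∘ σ) = φ p)
    (hconc : ∀ p r : ℕ → ℝ, IsPmf p → IsPmf r → ∀ l : ℝ, 0 ≤ l → l ≤ 1 →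
      ENNReal.ofReal l * φ p + ENNReal.ofReal (1 - l) * φ r ≤
        φ (fun x => l * p x + (1 - l) * r x)) (n : ℕ) (p : ℕ → ℝ) (hp : IsPmf p)
    (hanti : Antitone p) (m : ℕ) : ∀ r : ℕ → ℝ, IsPmf r → (∀ i, n ≤ i → r i = p i) →
      (∀ k, ∑ i ∈ Finset.range k, p i ≤ ∑ i ∈ Finset.range k, r i) →
      ((Finset.range n).filter (fun i => r i ≠ p i)).card ≤ m → φ r ≤ φ p := by
  induction m with
  | zero =>
    intro r hr heq _ hc
    have : r = p := by
      funext i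
      by_contra hne
      have hi : i < n := by
        by_contra h
        exact hne (heq i (by omega))
      have : i ∈ (Finset.range n).filter (fun i => r i ≠ p i) := by simp [hi, hne]
      have := Finset.card_pos.2 ⟨i, this⟩
      omega
    rw [this]
  | succ m ih =>
    intro r hr heq hdom hc
    by_cases hrp : r = p
    · rw [hrp]
    have hex : ∃ j, r j < p j := by
      by_contra! hcon
      apply hrp
      by_contra hne
      obtain ⟨i, hi⟩ := Function.ne_iff.1 hne
      have hlt : p i < r i := lt_of_le_of_ne (hcon i) (Ne.symm hi)
      have := Summable.tsum_lt_tsum hcon hlt hp.hasSum.summable hr.hasSum.summable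
      rw [hp.2, hr.2] at this
      exact lt_irrefl _ this
    obtain ⟨j, hj, hmin⟩ : ∃ j, r j < p j ∧ ∀ k < j, p k ≤ r k :=
      ⟨Nat.find hex, Nat.find_spec hex, fun k hk => not_lt.1 (Nat.find_min hex hk)⟩
    obtain ⟨i, hij, hi⟩ : ∃ i < j, p i < r i := by
      by_contra! hcon
      have h1 := hdom (j + 1)
      rw [Finset.sum_range_succ, Finset.sum_range_succ] at h1
      have : ∑ i ∈ Finset.range j, r i ≤ ∑ i ∈ Finset.range j, p i :=
        Finset.sum_le_sum fun k hk => hcon k (Finset.mem_range.1 hk)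
      linarith
    have hpij : p j ≤ p i := hanti hij.le
    have hjn : j < n := by
      by_contra h
      have := heq j (by omega)
      linarith
    set δ := min (r i - p i) (p j - r j) with hδ
    have hδ0 : 0 < δ := lt_min (by linarith) (by linarith)
    have hδ1 : δ ≤ r i - p i := min_le_left _ _
    have hδ2 : δ ≤ p j - r j := min_le_right _ _
    have hD : 0 < r i - r j := by linarith
    set l := 1 - δ / (r i - r j) with hl
    have hl1 : l ≤ 1 := by
      have : 0 ≤ δ / (r i - r j) := by positivity
      linarith
    have hl0 : 0 ≤ l := by
      have : δ / (r i - r j) ≤ 1 := by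
        rw [div_le_one hD]; linarith
      linarith
    have hlm : (1 - l) * (r i - r j) = δ := by
      rw [hl]; field_simp; ring
    set r' : ℕ → ℝ := fun x => l * r x + (1 - l) * (r ∘ Equiv.swap i j) x with hr'
    have hri : r' i = r i - δ := by
      simp only [hr', Function.comp, Equiv.swap_apply_left]; linarith
    have hrj : r' j = r j + δ := by
      simp only [hr', Function.comp, Equiv.swap_apply_right]; linarith
    have hrk : ∀ k, k ≠ i → k ≠ j → r' k = r k := by
      intro k h1 h2
      simp only [hr', Function.comp, Equiv.swap_apply_of_ne_of_ne h1 h2]; ring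
    have hpm' : IsPmf r' := hr.mix (hr.perm _) hl0 hl1
    have h1 : φ r ≤ φ r' := by
      have := hconc r (r ∘ Equiv.swap i j) hr (hr.perm _) l hl0 hl1
      rw [hsym, ← add_mul, ← ENNReal.ofReal_add hl0 (by linarith)] at this
      rw [add_sub_cancel, ENNReal.ofReal_one, one_mul] at this
      exact this
    refine h1.trans (ih r' hpm' ?_ ?_ ?_)
    · intro k hk
      rw [hrk k (by omega) (by omega)]
      exact heq k hk
    · intro k
      by_cases hkj : k ≤ j
      · refine Finset.sum_le_sum fun x hx => ?_
        have hx := Finset.mem_range.1 hx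
        by_cases hxi : x = i
        · subst hxi; rw [hri]; linarith
        · rw [hrk x hxi (by omega)]
          exact hmin x (by omega)
      · have : ∑ x ∈ Finset.range k, r' x = ∑ x ∈ Finset.range k, r x := by
          simp only [hr', Function.comp]
          rw [Finset.sum_add_distrib, ← Finset.mul_sum, ← Finset.mul_sum,
            Equiv.Perm.sum_comp (Equiv.swap i j) (Finset.range k) r]
          · ring
          · intro a ha
            simp only [Set.mem_ofPred_eq] at ha
            by_contra hn
            simp only [Finset.coe_range, Set.mem_Iio] at hn
            exact ha (Equiv.swap_apply_of_ne_of_ne (by omega) (by omega))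
        rw [this]
        exact hdom k
    · have hss : (Finset.range n).filter (fun x => r' x ≠ p x) ⊂
          (Finset.range n).filter (fun x => r x ≠ p x) := by
        rw [Finset.ssubset_iff_of_subset]
        · rcases min_choice (r i - p i) (p j - r j) with h | h
          · refine ⟨i, ?_, ?_⟩
            · simp only [Finset.mem_filter, Finset.mem_range]
              exact ⟨by omega, hi.ne'⟩
            · simp only [Finset.mem_filter, Finset.mem_range, not_and, not_not]
              intro _
              rw [hri, hδ, h]; ring
          · refine ⟨j, ?_, ?_⟩
            · simp only [Finset.mem_filter, Finset.mem_range]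
              exact ⟨by omega, hj.ne⟩
            · simp only [Finset.mem_filter, Finset.mem_range, not_and, not_not]
              intro _
              rw [hrj, hδ, h]; ring
        · intro x
          simp only [Finset.mem_filter, Finset.mem_range]
          rintro ⟨hx, hne⟩
          refine ⟨hx, ?_⟩
          by_cases hxi : x = i
          · subst hxi; exact hi.ne'
          by_cases hxj : x = j
          · subst hxj; exact hj.ne
          rwa [hrk x hxi hxj] at hne
      have := Finset.card_lt_card hss
      omega

/-- Schur concavity on `ℕ`, prefix-sum version. -/
lemma schur_prefix (φ : (ℕ → ℝ) → ENNReal)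
    (hsym : ∀ (p : ℕ → ℝ) (σ : Equiv.Perm ℕ), φ (p ∘ σ) = φ p)
    (hconc : ∀ p r : ℕ → ℝ, IsPmf p → IsPmf r → ∀ l : ℝ, 0 ≤ l → l ≤ 1 →
      ENNReal.ofReal l * φ p + ENNReal.ofReal (1 - l) * φ r ≤
        φ (fun x => l * p x + (1 - l) * r x))
    (hlsc : ∀ (P : ℕ → ℝ) (Pn : ℕ → ℕ → ℝ),
      (∀ x, Tendsto (fun n => Pn n x) atTop (𝓝 (P x))) →
      φ P ≤ liminf (fun n => φ (Pn n)) atTop) (p r : ℕ → ℝ) (hp : IsPmf p) (hr : IsPmf r)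
    (hanti : Antitone p)
    (hdom : ∀ k, ∑ i ∈ Finset.range k, p i ≤ ∑ i ∈ Finset.range k, r i) : φ r ≤ φ p := by
  set P : ℕ → ℝ := fun k => ∑ i ∈ Finset.range k, p i with hP
  set R : ℕ → ℝ := fun k => ∑ i ∈ Finset.range k, r i with hR
  have hPs : ∀ k, P (k + 1) = P k + p k := fun k => Finset.sum_range_succ _ _
  have hRs : ∀ k, R (k + 1) = R k + r k := fun k => Finset.sum_range_succ _ _
  have hPm : Monotone P := monotone_nat_of_le_succ fun k => by rw [hPs]; linarith [hp.1 k]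
  have hRm : Monotone R := monotone_nat_of_le_succ fun k => by rw [hRs]; linarith [hr.1 k]
  have hP0 : P 0 = 0 := by simp [hP]
  have hR0 : R 0 = 0 := by simp [hR]
  have hR1 : ∀ k, R k ≤ 1 := fun k => hr.sum_le_one _
  let rn : ℕ → ℕ → ℝ := fun n i => if i < n then min (R (i + 1)) (P n) - min (R i) (P n) else p i
  have hpre : ∀ n k, ∑ i ∈ Finset.range k, rn n i = if k ≤ n then min (R k) (P n) else P k := by
    intro n k
    induction k with
    | zero =>
      have : 0 ≤ P n := hP0 ▸ hPm (Nat.zero_le n)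
      simp [hR0, this]
    | succ k ih =>
      rw [Finset.sum_range_succ, ih]
      simp only [rn]
      rcases lt_trichotomy k n with h | h | h
      · rw [if_pos h.le, if_pos h, if_pos (by omega)]; ring
      · subst h
        rw [if_pos le_rfl, if_neg (lt_irrefl _), if_neg (by omega), min_eq_right (hdom k), hPs]
      · rw [if_neg (by omega), if_neg (by omega), if_neg (by omega), hPs]
  have hpm : ∀ n, IsPmf (rn n) := by
    intro n
    refine isPmf_of_tendsto ?_ ?_
    · intro i
      simp only [rn]
      split_ifs
      · exact sub_nonneg.2 (min_le_min_right _ (hRm (Nat.le_succ i)))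
      · exact hp.1 i
    · refine hp.tendsto.congr' ?_
      filter_upwards [eventually_gt_atTop n] with k hk
      rw [hpre, if_neg (by omega)]
  have hle : ∀ n, φ (rn n) ≤ φ p := by
    intro n
    refine fin_schur φ hsym hconc n p hp hanti _ (rn n) (hpm n) ?_ ?_ le_rfl
    · intro i hi
      simp only [rn]
      rw [if_neg (by omega)]
    · intro k
      rw [hpre]
      split_ifs with h
      · exact le_min (hdom k) (hPm h)
      · exact le_rfl
  have hlim : ∀ x, Tendsto (fun n => rn n x) atTop (𝓝 (r x)) := by
    intro x
    have h1 : Tendsto (fun n => min (R (x + 1)) (P n) - min (R x) (P n)) atTop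
        (𝓝 (min (R (x + 1)) 1 - min (R x) 1)) :=
      (tendsto_const_nhds.min hp.tendsto).sub (tendsto_const_nhds.min hp.tendsto)
    rw [min_eq_left (hR1 _), min_eq_left (hR1 _), hRs, add_sub_cancel_left] at h1
    refine h1.congr' ?_
    filter_upwards [eventually_gt_atTop x] with n hn
    simp only [rn]
    rw [if_pos hn, hRs]
  refine (hlsc r rn hlim).trans ?_
  calc liminf (fun n => φ (rn n)) atTop ≤ liminf (fun _ : ℕ => φ p) atTop :=
        liminf_le_liminf (Eventually.of_forall hle)
    _ = φ p := by simp

lemma IsPmf.topSum_bdd {p : ℕ → ℝ} (h : IsPmf p) (k : ℕ) :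
    BddAbove {t : ℝ | ∃ s : Finset ℕ, s.card = k ∧ t = ∑ x ∈ s, p x} := by
  refine ⟨1, ?_⟩
  rintro t ⟨s, _, rfl⟩
  exact h.sum_le_one s

lemma IsPmf.le_topSum {p : ℕ → ℝ} (h : IsPmf p) (s : Finset ℕ) :
    ∑ x ∈ s, p x ≤ topSum p s.card :=
  le_csSup (h.topSum_bdd _) ⟨s, rfl, rfl⟩

lemma topSum_le {p : ℕ → ℝ} {k : ℕ} {c : ℝ} (h : ∀ s : Finset ℕ, s.card = k → ∑ x ∈ s, p x ≤ c) :
    topSum p k ≤ c := by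
  refine csSup_le ⟨_, Finset.range k, by simp, rfl⟩ ?_
  rintro t ⟨s, hs, rfl⟩
  exact h s hs

lemma topSum_zero (p : ℕ → ℝ) : topSum p 0 = 0 := by
  simp [topSum]

lemma IsPmf.topSum_le_one {p : ℕ → ℝ} (h : IsPmf p) (k : ℕ) : topSum p k ≤ 1 :=
  topSum_le fun s _ => h.sum_le_one s

lemma IsPmf.range_le_topSum {p : ℕ → ℝ} (h : IsPmf p) (k : ℕ) :
    ∑ i ∈ Finset.range k, p i ≤ topSum p k := by
  simpa using h.le_topSum (Finset.range k)

lemma IsPmf.topSum_tendsto {p : ℕ → ℝ} (h : IsPmf p) : Tendsto (topSum p) atTop (𝓝 1) :=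
  tendsto_of_tendsto_of_tendsto_of_le_of_le h.tendsto tendsto_const_nhds
    h.range_le_topSum h.topSum_le_one

lemma IsPmf.topSum_mono {p : ℕ → ℝ} (h : IsPmf p) (k : ℕ) : topSum p k ≤ topSum p (k + 1) := by
  refine topSum_le fun s hs => ?_
  obtain ⟨x, hx⟩ := Infinite.exists_notMem_finset s
  have := h.le_topSum (insert x s)
  rw [Finset.card_insert_of_notMem hx, hs, Finset.sum_insert hx] at this
  linarith [h.1 x]

lemma IsPmf.topSum_concave {p : ℕ → ℝ} (h : IsPmf p) (k : ℕ) :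
    topSum p (k + 2) + topSum p k ≤ 2 * topSum p (k + 1) := by
  suffices h1 : topSum p k ≤ 2 * topSum p (k + 1) - topSum p (k + 2) by linarith
  refine topSum_le fun t ht => ?_
  suffices h1 : topSum p (k + 2) ≤ 2 * topSum p (k + 1) - ∑ x ∈ t, p x by linarith
  refine topSum_le fun s hs => ?_
  obtain ⟨x, hxs, hxt⟩ : ∃ x ∈ s, x ∉ t := Finset.exists_mem_notMem_of_card_lt_card (by omega)
  have h1 := h.le_topSum (insert x t)
  rw [Finset.card_insert_of_notMem hxt, ht, Finset.sum_insert hxt] at h1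
  have h2 := h.le_topSum (s.erase x)
  rw [Finset.card_erase_of_mem hxs, hs] at h2
  have h3 := Finset.add_sum_erase s p hxs
  simp only [Nat.add_succ_sub_one] at h2
  linarith

/-- 0-indexed decreasing rearrangement. -/
def decR (p : ℕ → ℝ) (i : ℕ) : ℝ := topSum p (i + 1) - topSum p i

lemma decR_prefix (p : ℕ → ℝ) (k : ℕ) : ∑ i ∈ Finset.range k, decR p i = topSum p k := by
  simp only [decR]
  rw [Finset.sum_range_sub, topSum_zero, sub_zero]

lemma IsPmf.decR_pmf {p : ℕ → ℝ} (h : IsPmf p) : IsPmf (decR p) := by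
  refine isPmf_of_tendsto (fun i => sub_nonneg.2 (h.topSum_mono i)) ?_
  simp only [decR_prefix]
  exact h.topSum_tendsto

lemma IsPmf.decR_anti {p : ℕ → ℝ} (h : IsPmf p) : Antitone (decR p) := by
  refine antitone_nat_of_succ_le fun k => ?_
  have := h.topSum_concave k
  simp only [decR]
  linarith

lemma sum_le_range_of_antitone {g : ℕ → ℝ} (hg : Antitone g) (h0 : ∀ i, 0 ≤ g i)
    (s : Finset ℕ) {k : ℕ} (hs : s.card ≤ k) : ∑ i ∈ s, g i ≤ ∑ i ∈ Finset.range k, g i := by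
  rw [← Finset.sum_sdiff_le_sum_sdiff]
  have h1 : ∑ i ∈ s \ Finset.range k, g i ≤ (s \ Finset.range k).card • g k :=
    Finset.sum_le_card_nsmul _ _ _ fun x hx => by
      simp only [Finset.mem_sdiff, Finset.mem_range, not_lt] at hx
      exact hg hx.2
  have h2 : (Finset.range k \ s).card • g k ≤ ∑ i ∈ Finset.range k \ s, g i :=
    Finset.card_nsmul_le_sum _ _ _ fun x hx => by
      simp only [Finset.mem_sdiff, Finset.mem_range] at hx
      exact hg hx.1.le
  have h3 : (s \ Finset.range k).card ≤ (Finset.range k \ s).card := by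
    have e1 := Finset.card_sdiff_add_card_inter s (Finset.range k)
    have e2 := Finset.card_sdiff_add_card_inter (Finset.range k) s
    rw [Finset.inter_comm, Finset.card_range] at e2
    omega
  calc _ ≤ _ := h1
    _ ≤ (Finset.range k \ s).card • g k := nsmul_le_nsmul_left (h0 k) h3
    _ ≤ _ := h2

lemma exists_sort (r : ℕ → ℝ) (h0 : ∀ i, 0 ≤ r i) (n : ℕ) : ∃ σ : Equiv.Perm ℕ,
    (∀ x, σ x < n ↔ x < n) ∧ Antitone (fun i => if i < n then r (σ i) else 0) := by
  let f : Fin n → ℝ := fun i => - r i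
  let τ : Equiv.Perm (Fin n) := Tuple.sort f
  have hτ : Monotone (f ∘ τ) := Tuple.monotone_sort f
  let σ : Equiv.Perm ℕ := τ.extendDomain (Fin.equivSubtype : Fin n ≃ {i // i < n})
  have h1 : ∀ x (hx : x < n), σ x = τ ⟨x, hx⟩ := by
    intro x hx
    exact Equiv.Perm.extendDomain_apply_subtype (p := fun i => i < n) τ Fin.equivSubtype hx
  have h2 : ∀ x, ¬ x < n → σ x = x := fun x hx =>
    Equiv.Perm.extendDomain_apply_not_subtype _ _ hx
  refine ⟨σ, ?_, ?_⟩
  · intro x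
    by_cases hx : x < n
    · rw [h1 x hx]; simp [hx]
    · rw [h2 x hx]
  · intro i j hij
    simp only
    by_cases hj : j < n
    · have hi : i < n := by omega
      rw [if_pos hj, if_pos hi, h1 i hi, h1 j hj]
      have := hτ (show (⟨i, hi⟩ : Fin n) ≤ ⟨j, hj⟩ from hij)
      simp only [f, Function.comp] at this
      linarith
    · rw [if_neg hj]
      split_ifs
      · exact h0 _
      · exact le_rfl

/-- Schur concavity on `ℕ`, general version. -/
lemma schur_top (φ : (ℕ → ℝ) → ENNReal)
    (hsym : ∀ (p : ℕ → ℝ) (σ : Equiv.Perm ℕ), φ (p ∘ σ) = φ p)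
    (hconc : ∀ p r : ℕ → ℝ, IsPmf p → IsPmf r → ∀ l : ℝ, 0 ≤ l → l ≤ 1 →
      ENNReal.ofReal l * φ p + ENNReal.ofReal (1 - l) * φ r ≤
        φ (fun x => l * p x + (1 - l) * r x))
    (hlsc : ∀ (P : ℕ → ℝ) (Pn : ℕ → ℕ → ℝ),
      (∀ x, Tendsto (fun n => Pn n x) atTop (𝓝 (P x))) →
      φ P ≤ liminf (fun n => φ (Pn n)) atTop) (p r : ℕ → ℝ) (hp : IsPmf p) (hr : IsPmf r)
    (hanti : Antitone p)
    (hdom : ∀ k, ∑ i ∈ Finset.range k, p i ≤ topSum r k) : φ r ≤ φ p := by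
  choose σ hσ1 hσ2 using exists_sort r hr.1
  set t : ℕ → ℝ := fun n => 1 - ∑ i ∈ Finset.range n, r i with ht
  have ht0 : ∀ n, 0 ≤ t n := fun n => sub_nonneg.2 (hr.sum_le_one _)
  have htl : Tendsto t atTop (𝓝 0) := by
    have := (tendsto_const_nhds (x := (1 : ℝ))).sub hr.tendsto
    rwa [sub_self] at this
  let u : ℕ → ℕ → ℝ := fun n x => if x < n then r x else 0
  let g : ℕ → ℕ → ℝ := fun n i => if i < n then r (σ n i) else 0
  have hug : ∀ n i, g n i = u n (σ n i) := by
    intro n i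
    simp only [g, u, hσ1]
  have hu0 : ∀ n x, 0 ≤ u n x := by
    intro n x
    simp only [u]
    split_ifs
    · exact hr.1 x
    · exact le_rfl
  have hg0 : ∀ n i, 0 ≤ g n i := fun n i => by rw [hug]; exact hu0 _ _
  have hus : ∀ n, HasSum (u n) (∑ i ∈ Finset.range n, r i) := by
    intro n
    have : HasSum (u n) (∑ b ∈ Finset.range n, u n b) := hasSum_sum_of_ne_finset_zero (by
      intro b hb
      simp only [Finset.mem_range] at hb
      simp [u, hb])
    convert! this using 1
    refine Finset.sum_congr rfl fun x hx => ?_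
    simp [u, Finset.mem_range.1 hx]
  let v : ℕ → ℕ → ℝ := fun n x => u n x + if x = σ n 0 then t n else 0
  have hv : ∀ n, IsPmf (v n) := by
    intro n
    refine isPmf_of_hasSum (fun x => ?_) ?_
    · refine add_nonneg (hu0 n x) ?_
      split_ifs
      · exact ht0 n
      · exact le_rfl
    · have := (hus n).add (hasSum_ite_eq (σ n 0) (t n))
      simpa [ht] using this
  have hvσ : ∀ n i, (v n ∘ σ n) i = g n i + if i = 0 then t n else 0 := by
    intro n i
    simp only [v, Function.comp, hug, EmbeddingLike.apply_eq_iff_eq]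
  have hle : ∀ n, φ (v n) ≤ φ p := by
    intro n
    rw [← hsym (v n) (σ n)]
    refine schur_prefix φ hsym hconc hlsc p _ hp ((hv n).perm _) hanti ?_
    intro k
    rcases Nat.eq_zero_or_pos k with rfl | hk
    · simp
    refine (hdom k).trans (topSum_le fun s hs => ?_)
    have e1 : ∑ i ∈ Finset.range k, (v n ∘ σ n) i = ∑ i ∈ Finset.range k, g n i + t n := by
      simp only [hvσ]
      rw [Finset.sum_add_distrib, Finset.sum_ite_eq', if_pos (Finset.mem_range.2 hk)]
    rw [e1]
    have e2 : ∑ x ∈ s, r x = ∑ x ∈ s, u n x + ∑ x ∈ s.filter (fun x => ¬ x < n), r x := by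
      simp only [u]
      rw [← Finset.sum_filter, Finset.sum_filter_add_sum_filter_not]
    rw [e2]
    have e3 : ∑ x ∈ s, u n x ≤ ∑ i ∈ Finset.range k, g n i := by
      have := sum_le_range_of_antitone (hσ2 n) (hg0 n) (s.map (σ n).symm.toEmbedding) (k := k)
        (by rw [Finset.card_map]; omega)
      rw [Finset.sum_map] at this
      refine le_trans (le_of_eq ?_) this
      refine Finset.sum_congr rfl fun x _ => ?_
      have := hug n ((σ n).symm x)
      rw [Equiv.apply_symm_apply] at this
      exact this.symm
    have e4 : ∑ x ∈ s.filter (fun x => ¬ x < n), r x ≤ t n := by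
      have hdis : Disjoint (s.filter (fun x => ¬ x < n)) (Finset.range n) := by
        rw [Finset.disjoint_left]
        intro a ha hb
        exact (Finset.mem_filter.1 ha).2 (Finset.mem_range.1 hb)
      have := hr.sum_le_one (s.filter (fun x => ¬ x < n) ∪ Finset.range n)
      rw [Finset.sum_union hdis] at this
      simp only [ht]
      linarith
    linarith
  have hlim : ∀ x, Tendsto (fun n => v n x) atTop (𝓝 (r x)) := by
    intro x
    have h2 : Tendsto (fun n => r x + t n) atTop (𝓝 (r x)) := by
      simpa using (tendsto_const_nhds (x := r x)).add htl
    refine tendsto_of_tendsto_of_tendsto_of_le_of_le' tendsto_const_nhds h2 ?_ ?_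
    · filter_upwards [eventually_gt_atTop x] with n hn
      simp only [v, u, if_pos hn]
      have := ht0 n
      split_ifs <;> linarith
    · filter_upwards [eventually_gt_atTop x] with n hn
      simp only [v, u, if_pos hn]
      have := ht0 n
      split_ifs <;> linarith
  refine (hlsc r v hlim).trans ?_
  calc liminf (fun n => φ (v n)) atTop ≤ liminf (fun _ : ℕ => φ p) atTop :=
        liminf_le_liminf (Eventually.of_forall hle)
    _ = φ p := by simp

lemma jensen_fin {β : Type*} (φ : (ℕ → ℝ) → ENNReal)
    (hconc : ∀ p r : ℕ → ℝ, IsPmf p → IsPmf r → ∀ l : ℝ, 0 ≤ l → l ≤ 1 →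
      ENNReal.ofReal l * φ p + ENNReal.ofReal (1 - l) * φ r ≤
        φ (fun x => l * p x + (1 - l) * r x))
    (q : β → ℝ) (hq : ∀ y, 0 ≤ q y) (V : β → ℕ → ℝ) (hV : ∀ y, IsPmf (V y)) (s : Finset β) :
    ∀ (w : ℝ) (r : ℕ → ℝ), 0 ≤ w → IsPmf r → ∑ y ∈ s, q y + w = 1 →
      ∑ y ∈ s, ENNReal.ofReal (q y) * φ (V y) + ENNReal.ofReal w * φ r ≤
        φ (fun x => ∑ y ∈ s, q y * V y x + w * r x) := by
  induction s using Finset.induction_on with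
  | empty =>
    intro w r _ _ h
    simp only [Finset.sum_empty, zero_add] at h ⊢
    subst h
    simp
  | insert a s ha ih =>
    intro w r hw hr h
    rw [Finset.sum_insert ha] at h
    simp only [Finset.sum_insert ha]
    have hqa := hq a
    rcases (add_nonneg hqa hw).eq_or_lt with h0 | h0
    · have e1 : q a = 0 := by linarith
      have e2 : w = 0 := by linarith
      have := ih w r hw hr (by linarith)
      simpa [e1, e2] using this
    · set l := q a / (q a + w) with hl
      have hl0 : 0 ≤ l := by positivity
      have hl1 : l ≤ 1 := by rw [hl, div_le_one h0]; linarith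
      have m1 : (q a + w) * l = q a := by rw [hl]; field_simp
      have m2 : (q a + w) * (1 - l) = w := by linarith
      have := ih (q a + w) _ h0.le ((hV a).mix hr hl0 hl1) (by linarith)
      have hc := hconc (V a) r (hV a) hr l hl0 hl1
      have e : (fun x => ∑ y ∈ s, q y * V y x + (q a + w) * (l * V a x + (1 - l) * r x)) =
          fun x => q a * V a x + ∑ y ∈ s, q y * V y x + w * r x := by
        funext x
        linear_combination V a x * m1 + r x * m2
      rw [e] at this
      refine le_trans ?_ this
      have h3 := mul_le_mul_right hc (ENNReal.ofReal (q a + w))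
      rw [mul_add, ← mul_assoc, ← mul_assoc, ← ENNReal.ofReal_mul h0.le,
        ← ENNReal.ofReal_mul h0.le, m1, m2] at h3
      calc _ = ∑ y ∈ s, ENNReal.ofReal (q y) * φ (V y) +
            (ENNReal.ofReal (q a) * φ (V a) + ENNReal.ofReal w * φ r) := by ring
        _ ≤ _ := by gcongr

lemma jensen_inf {β : Type*} (φ : (ℕ → ℝ) → ENNReal)
    (hconc : ∀ p r : ℕ → ℝ, IsPmf p → IsPmf r → ∀ l : ℝ, 0 ≤ l → l ≤ 1 →
      ENNReal.ofReal l * φ p + ENNReal.ofReal (1 - l) * φ r ≤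
        φ (fun x => l * p x + (1 - l) * r x))
    (q : β → ℝ) (hq : IsPmf q) (V : β → ℕ → ℝ) (hV : ∀ y, IsPmf (V y))
    (M : ℕ → ℝ) (hM : IsPmf M) (hMs : ∀ x, HasSum (fun y => q y * V y x) (M x)) :
    ∑' y, ENNReal.ofReal (q y) * φ (V y) ≤ φ M := by
  rw [ENNReal.tsum_eq_iSup_sum]
  refine iSup_le fun s => ?_
  set w := 1 - ∑ y ∈ s, q y with hw
  have hw0 : 0 ≤ w := sub_nonneg.2 (hq.sum_le_one s)
  have hN0 : ∀ x, 0 ≤ M x - ∑ y ∈ s, q y * V y x := fun x =>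
    sub_nonneg.2 (sum_le_hasSum s (fun y _ => mul_nonneg (hq.1 y) ((hV y).1 x)) (hMs x))
  have hNs : HasSum (fun x => M x - ∑ y ∈ s, q y * V y x) w := by
    refine hM.hasSum.sub ?_
    have := hasSum_sum (s := s) (fun y _ => (hV y).hasSum.mul_left (q y))
    simpa using this
  obtain ⟨r, hr, hrM⟩ : ∃ r : ℕ → ℝ, IsPmf r ∧ ∀ x, w * r x = M x - ∑ y ∈ s, q y * V y x := by
    rcases hw0.eq_or_lt with h | h
    · refine ⟨M, hM, fun x => ?_⟩
      rw [← h] at hNs ⊢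
      have := (hasSum_zero_iff_of_nonneg hN0).1 hNs
      rw [congrFun this x]; simp
    · refine ⟨fun x => w⁻¹ * (M x - ∑ y ∈ s, q y * V y x), isPmf_of_hasSum ?_ ?_, ?_⟩
      · intro x
        exact mul_nonneg (inv_nonneg.2 hw0) (hN0 x)
      · have := hNs.mul_left w⁻¹
        rwa [inv_mul_cancel₀ h.ne'] at this
      · intro x
        simp only
        rw [mul_inv_cancel_left₀ h.ne']
  have := jensen_fin φ hconc q hq.1 V hV s w r hw0 hr (by linarith)
  have e : (fun x => ∑ y ∈ s, q y * V y x + w * r x) = M := by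
    funext x
    rw [hrM]; ring
  rw [e] at this
  exact le_self_add.trans this

lemma anti_lower {r : ℕ → ℝ} (hr : Antitone r) {a k : ℕ} (h : a ≤ k) :
    ∑ i ∈ Finset.range a, r i + ((k : ℝ) - a) * r k ≤ ∑ i ∈ Finset.range k, r i := by
  induction k, h using Nat.le_induction with
  | base => simp
  | succ k hk ih =>
    rw [Finset.sum_range_succ]
    have h1 : r (k + 1) ≤ r k := hr (Nat.le_succ k)
    have h2 : (0 : ℝ) ≤ (k : ℝ) - a := by
      have : (a : ℝ) ≤ k := by exact_mod_cast hk
      linarith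
    push_cast
    nlinarith

lemma anti_upper {r : ℕ → ℝ} (hr : Antitone r) {k b : ℕ} (h : k ≤ b) :
    ∑ i ∈ Finset.range b, r i ≤ ∑ i ∈ Finset.range k, r i + ((b : ℝ) - k) * r k := by
  induction b, h using Nat.le_induction with
  | base => simp
  | succ b hk ih =>
    rw [Finset.sum_range_succ]
    have h1 : r b ≤ r k := hr hk
    push_cast
    nlinarith

lemma anti_chord {r : ℕ → ℝ} (hr : Antitone r) {a k b : ℕ} (h1 : a ≤ k) (h2 : k ≤ b) {A v : ℝ}
    (ha : A ≤ ∑ i ∈ Finset.range a, r i)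
    (hb : A + v * ((b : ℝ) - a) ≤ ∑ i ∈ Finset.range b, r i) :
    A + v * ((k : ℝ) - a) ≤ ∑ i ∈ Finset.range k, r i := by
  have l1 := anti_lower hr h1
  have l2 := anti_upper hr h2
  have c1 : (a : ℝ) ≤ k := by exact_mod_cast h1
  have c2 : (k : ℝ) ≤ b := by exact_mod_cast h2
  rcases le_total v (r k) with h | h
  · nlinarith
  · nlinarith

lemma sum_Icc_eq_range (d : ℕ → ℝ) (k : ℕ) :
    ∑ i ∈ Finset.Icc 1 k, d i = ∑ i ∈ Finset.range k, d (i + 1) := by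
  induction k with
  | zero => simp
  | succ k ih => rw [Finset.sum_Icc_succ_top (by omega), Finset.sum_range_succ, ih]

/-- Shape of the first part of the Fano-type-1 distribution. -/
lemma fano_J (d S : ℕ → ℝ) (L : ℕ) (ε : ℝ) (hL : 1 ≤ L) (hε0 : 0 ≤ ε)
    (hS : ∀ k, ∑ i ∈ Finset.Icc 1 k, d i = S k) (hSs : ∀ k, S (k + 1) = S k + d (k + 1))
    (hS1 : ∀ k, S k ≤ 1) (hSm : Monotone S)
    (hanti : ∀ i j, 1 ≤ i → i ≤ j → d j ≤ d i) (hSL : S L ≤ 1 - ε) (hS0 : S 0 = 0) :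
    1 ≤ fanoJ d L ε ∧ fanoJ d L ε ≤ L + 1 ∧
    (fanoJ d L ε ≤ L → d (fanoJ d L ε) < fanoV d L ε (fanoJ d L ε) ∧
      S (fanoJ d L ε - 1) + fanoV d L ε (fanoJ d L ε) * ((L : ℝ) - fanoJ d L ε + 1) = 1 - ε) ∧
    (fanoJ d L ε = L + 1 → S L = 1 - ε) ∧
    (2 ≤ fanoJ d L ε → fanoJ d L ε ≤ L → fanoV d L ε (fanoJ d L ε) ≤ d (fanoJ d L ε - 1)) := by
  have hmem : L + 1 ∈ {j : ℕ | 1 ≤ j ∧ d j < fanoV d L ε j} := by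
    refine ⟨by omega, ?_⟩
    simp only [fanoV]
    rw [if_neg (by omega)]
    have h1 := hSs 0
    have h2 := hSs L
    have h3 := hS1 (L + 1)
    have h4 := hSm hL
    have h5 := hanti 1 (L + 1) le_rfl (by omega)
    rw [hS0] at h1
    simp only [zero_add] at h1
    linarith
  have hJm : fanoJ d L ε ∈ {j : ℕ | 1 ≤ j ∧ d j < fanoV d L ε j} := Nat.sInf_mem ⟨_, hmem⟩
  have hJle : fanoJ d L ε ≤ L + 1 := Nat.sInf_le hmem
  have hJn : ∀ j, 1 ≤ j → j < fanoJ d L ε → fanoV d L ε j ≤ d j := by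
    intro j h1 h2
    have := Nat.notMem_of_lt_sInf h2
    by_contra hc
    exact this ⟨h1, not_le.1 hc⟩
  have hV : ∀ j, j ≤ L → S (j - 1) + fanoV d L ε j * ((L : ℝ) - j + 1) = 1 - ε := by
    intro j hj
    have hjc : (j : ℝ) ≤ L := by exact_mod_cast hj
    simp only [fanoV]
    rw [if_pos hj, hS, div_mul_cancel₀ _ (by linarith)]
    ring
  generalize fanoJ d L ε = J at *
  refine ⟨hJm.1, hJle, fun h => ⟨hJm.2, hV J h⟩, ?_, ?_⟩
  · intro h
    have h1 := hJn L hL (by omega)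
    have h2 := hV L le_rfl
    obtain ⟨m, rfl⟩ : ∃ m, L = m + 1 := ⟨L - 1, by omega⟩
    have h3 := hSs m
    simp only [Nat.add_sub_cancel] at h2
    have h4 : fanoV d (m + 1) ε (m + 1) * (((m + 1 : ℕ) : ℝ) - (m + 1 : ℕ) + 1) =
      fanoV d (m + 1) ε (m + 1) := by ring
    rw [h4] at h2
    linarith
  · intro h2 hJL
    obtain ⟨m, rfl⟩ : ∃ m, J = m + 2 := ⟨J - 2, by omega⟩
    have e0 := hJn (m + 1) (by omega) (by omega)
    have e1 := hV (m + 1) (by omega)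
    have e2 := hV (m + 2) hJL
    have e3 := hSs m
    simp only [Nat.add_sub_cancel, show m + 2 - 1 = m + 1 by omega] at e1 e2 ⊢
    have hc : ((m : ℝ) + 2) ≤ L := by exact_mod_cast hJL
    push_cast at e1 e2
    have f1 : fanoV d L ε (m + 1) * ((L : ℝ) - (m + 1) + 1) ≤ d (m + 1) * ((L : ℝ) - (m + 1) + 1) :=
      mul_le_mul_of_nonneg_right e0 (by linarith)
    have f2 : fanoV d L ε (m + 2) * ((L : ℝ) - (m + 2) + 1) ≤
        d (m + 1) * ((L : ℝ) - (m + 2) + 1) := by linarith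
    exact le_of_mul_le_mul_right f2 (by linarith)

/-- Shape of the tail part of the Fano-type-1 distribution. -/
lemma fano_K (d S : ℕ → ℝ) (L : ℕ) (ε : ℝ) (hε0 : 0 ≤ ε)
    (hS : ∀ k, ∑ i ∈ Finset.Icc 1 k, d i = S k) (hSs : ∀ k, S (k + 1) = S k + d (k + 1))
    (hS1 : ∀ k, S k ≤ 1) (hSt : Tendsto S atTop (𝓝 1)) (hd0 : ∀ i, 0 ≤ d i)
    (hanti : ∀ i j, 1 ≤ i → i ≤ j → d j ≤ d i) (hSL : S L ≤ 1 - ε) :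
    (fanoK d L ε = ⊤ ∧ ε = 0) ∨
    ∃ n : ℕ, fanoK d L ε = n ∧ L ≤ n ∧ (n = L → S L = 1 - ε) ∧
      (L < n → fanoW d L ε n < d n ∧ fanoW d L ε n * ((n : ℝ) - L) = S n - (1 - ε) ∧
        d (n + 1) ≤ fanoW d L ε n) := by
  have hW : ∀ n, L < n → fanoW d L ε n * ((n : ℝ) - L) = S n - (1 - ε) := by
    intro n hn
    have hc : (L : ℝ) < n := by exact_mod_cast hn
    simp only [fanoW]
    rw [if_neg (by omega), hS, div_mul_cancel₀ _ (by linarith)]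
  set A : Set ℕ∞ := {k : ℕ∞ | ∃ n : ℕ, k = (n : ℕ∞) ∧ L ≤ n ∧ fanoW d L ε n < d n} with hA
  have hne : (L : ℕ∞) ∈ A := by
    refine ⟨L, rfl, le_rfl, ?_⟩
    simp only [fanoW, if_pos]
    linarith [hd0 L]
  have hK : fanoK d L ε = sSup A := rfl
  by_cases htop : fanoK d L ε = ⊤
  · left
    refine ⟨htop, ?_⟩
    by_contra hε
    have hε' : 0 < ε := lt_of_le_of_ne hε0 (Ne.symm hε)
    have hbig : ∀ N : ℕ, ∃ n, N < n ∧ L ≤ n ∧ fanoW d L ε n < d n := by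
      intro N
      by_contra! hcon
      have : sSup A ≤ (N : ℕ∞) := by
        refine sSup_le ?_
        rintro k ⟨n, rfl, h1, h2⟩
        by_contra h3
        have h3 : N < n := by exact_mod_cast not_le.1 h3
        exact absurd h2 (not_lt.2 (hcon n h3 h1))
      rw [← hK, htop] at this
      exact absurd this (by simp)
    obtain ⟨m, hm⟩ := (hSt.eventually (lt_mem_nhds (show 1 - ε / 4 < 1 by linarith))).exists_forall_of_atTop
    have hr : Antitone (fun i => d (i + 1)) := fun i j hij => hanti _ _ (by omega) (by omega)
    have hdl : Tendsto (fun i => ((m : ℝ) + 1) * d (i + 1)) atTop (𝓝 0) := by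
      have h1 := ((hSt.comp (tendsto_add_atTop_nat 1)).sub hSt).const_mul ((m : ℝ) + 1)
      rw [sub_self, mul_zero] at h1
      refine h1.congr fun i => ?_
      simp only [Function.comp]
      rw [hSs]; ring
    obtain ⟨m', hm'⟩ := (hdl.eventually (gt_mem_nhds (show 0 < ε / 4 by linarith))).exists_forall_of_atTop
    obtain ⟨n, hn, hnL, hnW⟩ := hbig (L + m + m' + 1)
    obtain ⟨j, rfl⟩ : ∃ j, n = j + 1 := ⟨n - 1, by omega⟩
    have h1 := hW (j + 1) (by omega)
    have h2 := anti_lower hr (show m ≤ j by omega)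
    have h3 := hm m le_rfl
    have h4 := hm (j + 1) (by omega)
    have h5 := hm' j (by omega)
    rw [← sum_Icc_eq_range, ← sum_Icc_eq_range, hS, hS] at h2
    have h6 := hS1 j
    have hc : (L : ℝ) + 1 < ((j + 1 : ℕ) : ℝ) := by exact_mod_cast (by omega : L + 1 < j + 1)
    have h7 : fanoW d L ε (j + 1) * (((j + 1 : ℕ) : ℝ) - L) < d (j + 1) * (((j + 1 : ℕ) : ℝ) - L) :=
      mul_lt_mul_of_pos_right hnW (by linarith)
    have h8 : 0 ≤ d (j + 1) * L := mul_nonneg (hd0 _) (Nat.cast_nonneg _)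
    push_cast at h1 h7
    linarith
  · right
    obtain ⟨n, hn⟩ := ENat.ne_top_iff_exists.1 htop
    have hmemn : (n : ℕ∞) ∈ A := by
      rw [hn, hK]
      haveI : Nonempty A := ⟨⟨_, hne⟩⟩
      exact ENat.sSup_mem_of_nonempty_of_lt_top (lt_top_iff_ne_top.2 htop)
    have hnot : d (n + 1) ≤ fanoW d L ε (n + 1) := by
      by_contra hc
      have hLn : L ≤ n := by
        have := le_sSup hne
        rw [← hK, ← hn] at this
        exact_mod_cast this
      have : ((n + 1 : ℕ) : ℕ∞) ≤ sSup A := le_sSup ⟨n + 1, rfl, by omega, not_le.1 hc⟩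
      rw [← hK, ← hn] at this
      have : n + 1 ≤ n := by exact_mod_cast this
      omega
    obtain ⟨n', hn', hL', hw'⟩ := hmemn
    have : n' = n := by exact_mod_cast hn'.symm
    subst this
    have h1 := hW (n' + 1) (by omega)
    have h2 := hSs n'
    have hc0 : (L : ℝ) ≤ n' := by exact_mod_cast hL'
    have h3 : d (n' + 1) * (((n' + 1 : ℕ) : ℝ) - L) ≤
        fanoW d L ε (n' + 1) * (((n' + 1 : ℕ) : ℝ) - L) :=
      mul_le_mul_of_nonneg_right hnot (by push_cast; linarith)
    have h4 : d (n' + 1) * ((n' : ℝ) - L) ≤ S n' - (1 - ε) := by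
      push_cast at h1 h3
      linarith
    refine ⟨n', hn.symm, hL', ?_, ?_⟩
    · rintro rfl
      rw [sub_self, mul_zero] at h4
      linarith
    · intro hlt
      refine ⟨hw', hW n' hlt, ?_⟩
      rw [← hW n' hlt] at h4
      have hc : (L : ℝ) < n' := by exact_mod_cast hlt
      exact le_of_mul_le_mul_right h4 (by linarith)

/-- Assembly of the first part with a tail `T` having partial sums `U`. -/
lemma fano_assemble (d S T U r : ℕ → ℝ) (J L : ℕ) (V ε : ℝ)
    (hSs : ∀ k, S (k + 1) = S k + d (k + 1)) (hS0 : S 0 = 0) (hd0 : ∀ i, 0 ≤ d i)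
    (hanti : ∀ i j, 1 ≤ i → i ≤ j → d j ≤ d i)
    (hJ1 : 1 ≤ J) (hJL : J ≤ L + 1)
    (hJa : J ≤ L → d J < V ∧ S (J - 1) + V * ((L : ℝ) - J + 1) = 1 - ε)
    (hJb : J = L + 1 → S L = 1 - ε)
    (hJc : 2 ≤ J → J ≤ L → V ≤ d (J - 1))
    (hUL : U L = 1 - ε) (hUs : ∀ k, L ≤ k → U (k + 1) = U k + T (k + 1))
    (hT0 : ∀ k, L < k → 0 ≤ T k) (hTa : ∀ k, L < k → T (k + 1) ≤ T k) (hTL : T (L + 1) ≤ d (L + 1))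
    (hUt : Tendsto U atTop (𝓝 1))
    (hra : Antitone r) (hrS : ∀ k, S k ≤ ∑ i ∈ Finset.range k, r i)
    (hrL : 1 - ε ≤ ∑ i ∈ Finset.range L, r i)
    (hrU : ∀ k, L ≤ k → U k ≤ ∑ i ∈ Finset.range k, r i)
    (p : ℕ → ℝ)
    (hp : ∀ i, p i = if i + 1 < J then d (i + 1) else if i + 1 ≤ L then V else T (i + 1)) :
    IsPmf p ∧ Antitone p ∧ ∀ k, ∑ i ∈ Finset.range k, p i ≤ ∑ i ∈ Finset.range k, r i := by
  have hpre : ∀ k, ∑ i ∈ Finset.range k, p i =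
      if k < J then S k else if k ≤ L then 1 - ε - V * ((L : ℝ) - k) else U k := by
    intro k
    induction k with
    | zero => simp [hS0, show 0 < J by omega]
    | succ k ih =>
      rw [Finset.sum_range_succ, ih, hp]
      by_cases h1 : k + 1 < J
      · rw [if_pos (show k < J by omega), if_pos h1, if_pos h1, hSs]
      rw [if_neg h1, if_neg h1]
      by_cases h2 : k + 1 ≤ L
      · rw [if_pos h2, if_pos h2]
        by_cases h3 : k < J
        · rw [if_pos h3]
          obtain rfl : J = k + 1 := by omega
          have := (hJa h2).2
          simp only [Nat.add_sub_cancel] at this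
          push_cast at this ⊢
          linarith
        · rw [if_neg h3, if_pos (by omega)]
          push_cast
          ring
      · rw [if_neg h2, if_neg h2]
        by_cases h3 : k < J
        · rw [if_pos h3]
          obtain rfl : k = L := by omega
          rw [hJb (by omega), hUs k le_rfl, hUL]
        · rw [if_neg h3]
          by_cases h4 : k ≤ L
          · obtain rfl : k = L := by omega
            rw [if_pos le_rfl, hUs k le_rfl, hUL]; ring
          · rw [if_neg h4, hUs k (by omega)]
  refine ⟨isPmf_of_tendsto ?_ ?_, ?_, ?_⟩
  · intro i
    rw [hp]
    split_ifs with h1 h2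
    · exact hd0 _
    · exact (hd0 J).trans (hJa (by omega)).1.le
    · exact hT0 _ (by omega)
  · refine hUt.congr' ?_
    filter_upwards [eventually_gt_atTop (L + 1)] with k hk
    rw [hpre, if_neg (by omega), if_neg (by omega)]
  · refine antitone_nat_of_succ_le fun i => ?_
    rw [hp, hp]
    by_cases h1 : i + 1 + 1 < J
    · rw [if_pos h1, if_pos (by omega)]
      exact hanti _ _ (by omega) (by omega)
    rw [if_neg h1]
    by_cases h2 : i + 1 + 1 ≤ L
    · rw [if_pos h2]
      by_cases h3 : i + 1 < J
      · rw [if_pos h3]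
        obtain rfl : J = i + 2 := by omega
        exact hJc (by omega) h2
      · rw [if_neg h3, if_pos (by omega)]
    · rw [if_neg h2]
      by_cases h3 : i + 1 < J
      · rw [if_pos h3]
        obtain rfl : L = i + 1 := by omega
        exact hTL.trans (hanti _ _ (by omega) (by omega))
      · rw [if_neg h3]
        by_cases h4 : i + 1 ≤ L
        · rw [if_pos h4]
          obtain rfl : L = i + 1 := by omega
          exact hTL.trans ((hanti J _ hJ1 (by omega)).trans (hJa (by omega)).1.le)
        · rw [if_neg h4]
          exact hTa _ (by omega)
  · intro k
    rw [hpre]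
    split_ifs with h1 h2
    · exact hrS k
    · obtain ⟨m, rfl⟩ : ∃ m, J = m + 1 := ⟨J - 1, by omega⟩
      have e := (hJa (by omega)).2
      simp only [Nat.add_sub_cancel] at e
      push_cast at e
      have := anti_chord hra (show m ≤ k by omega) h2 (A := S m) (v := V) (hrS m) (by linarith)
      linarith
    · exact hrU k (by omega)

lemma fano_main (d : ℕ → ℝ) (L : ℕ) (ε : ℝ) (hL : 1 ≤ L) (hε0 : 0 ≤ ε) (hd00 : d 0 = 0)
    (hd0 : ∀ i, 0 ≤ d i) (hanti : ∀ i j, 1 ≤ i → i ≤ j → d j ≤ d i)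
    (S : ℕ → ℝ) (hS : ∀ k, ∑ i ∈ Finset.Icc 1 k, d i = S k)
    (hS1 : ∀ k, S k ≤ 1) (hSt : Tendsto S atTop (𝓝 1)) (hSL : S L ≤ 1 - ε)
    (r : ℕ → ℝ) (hr0 : ∀ i, 0 ≤ r i) (hra : Antitone r)
    (hrS : ∀ k, S k ≤ ∑ i ∈ Finset.range k, r i)
    (hrL : 1 - ε ≤ ∑ i ∈ Finset.range L, r i) :
    fanoType1 d L ε 0 = 0 ∧ IsPmf (fun i => fanoType1 d L ε (i + 1)) ∧
    Antitone (fun i => fanoType1 d L ε (i + 1)) ∧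
    ∀ k, ∑ i ∈ Finset.range k, fanoType1 d L ε (i + 1) ≤ ∑ i ∈ Finset.range k, r i := by
  have hSs : ∀ k, S (k + 1) = S k + d (k + 1) := by
    intro k
    rw [← hS, ← hS, Finset.sum_Icc_succ_top (by omega)]
  have hS0 : S 0 = 0 := by rw [← hS]; simp
  have hSm : Monotone S := monotone_nat_of_le_succ fun k => by rw [hSs]; linarith [hd0 (k + 1)]
  obtain ⟨hJ1, hJL, hJa, hJb, hJc⟩ := fano_J d S L ε hL hε0 hS hSs hS1 hSm hanti hSL hS0
  have hrm : Monotone (fun k => ∑ i ∈ Finset.range k, r i) :=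
    monotone_nat_of_le_succ fun k => by rw [Finset.sum_range_succ]; linarith [hr0 k]
  refine ⟨?_, ?_⟩
  · simp only [fanoType1]
    rw [if_pos (by omega), hd00]
  rcases fano_K d S L ε hε0 hS hSs hS1 hSt hd0 hanti hSL with ⟨hK, hε⟩ | ⟨n, hK, hLn, hna, hnb⟩
  · refine fano_assemble d S (fun _ => 0) (fun _ => 1 - ε) r (fanoJ d L ε) L
      (fanoV d L ε (fanoJ d L ε)) ε hSs hS0 hd0 hanti hJ1 hJL hJa hJb hJc rfl (fun _ _ => by ring)
      (fun _ _ => le_rfl) (fun _ _ => le_rfl) (hd0 _) ?_ hra hrS hrL ?_ _ ?_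
    · rw [hε, sub_zero]; exact tendsto_const_nhds
    · intro k hk
      exact hrL.trans (hrm hk)
    · intro i
      simp only [fanoType1, hK, le_top, if_true]
  · set w := fanoW d L ε n with hw
    have hKx : ∀ x : ℕ, ((x : ℕ∞) ≤ fanoK d L ε) ↔ x ≤ n := by
      intro x; rw [hK]; exact_mod_cast Iff.rfl
    refine fano_assemble d S (fun x => if x ≤ n then w else d x)
      (fun k => if k ≤ n then 1 - ε + w * ((k : ℝ) - L) else S k) r (fanoJ d L ε) L
      (fanoV d L ε (fanoJ d L ε)) ε hSs hS0 hd0 hanti hJ1 hJL hJa hJb hJc ?_ ?_ ?_ ?_ ?_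
      ?_ hra hrS hrL ?_ _ ?_
    · simp [hLn]
    · intro k hk
      by_cases h1 : k + 1 ≤ n
      · rw [if_pos h1, if_pos (by omega), if_pos h1]; push_cast; ring
      · rw [if_neg h1, if_neg h1]
        by_cases h2 : k ≤ n
        · obtain rfl : k = n := by omega
          rw [if_pos h2, hSs]
          rcases hLn.eq_or_lt with h3 | h3
          · subst h3; rw [hna rfl]; ring
          · linarith [(hnb h3).2.1]
        · rw [if_neg h2, hSs]
    · intro k hk
      split_ifs with h
      · exact (hd0 _).trans (hnb (by omega)).2.2
      · exact hd0 _
    · intro k hk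
      by_cases h1 : k + 1 ≤ n
      · rw [if_pos h1, if_pos (by omega)]
      · rw [if_neg h1]
        split_ifs with h2
        · obtain rfl : k = n := by omega
          exact (hnb hk).2.2
        · exact hanti _ _ (by omega) (by omega)
    · split_ifs with h
      · exact (hnb (by omega)).1.le.trans (hanti _ _ (by omega) h)
      · exact le_rfl
    · refine hSt.congr' ?_
      filter_upwards [eventually_gt_atTop n] with k hk
      rw [if_neg (by omega)]
    · intro k hk
      split_ifs with h
      · rcases hLn.eq_or_lt with h3 | h3
        · obtain rfl : k = L := by omega
          simpa using hrL
        · refine anti_chord hra hk h hrL ?_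
          linarith [(hnb h3).2.1, hrS n]
      · exact hrS k
    · intro i
      have : ¬ fanoK d L ε = ⊤ := by rw [hK]; simp
      simp only [fanoType1, hKx, if_neg this]
      rw [hK, ENat.toNat_natCast]

/-- Dropping a zero at the index `0` does not increase `φ`. -/
lemma phi_shift (φ : (ℕ → ℝ) → ENNReal)
    (hsym : ∀ (p : ℕ → ℝ) (σ : Equiv.Perm ℕ), φ (p ∘ σ) = φ p)
    (hlsc : ∀ (P : ℕ → ℝ) (Pn : ℕ → ℕ → ℝ),
      (∀ x, Tendsto (fun n => Pn n x) atTop (𝓝 (P x))) →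
      φ P ≤ liminf (fun n => φ (Pn n)) atTop) (p : ℕ → ℝ) :
    φ (fun i => p (i + 1)) ≤ φ p := by
  let σ : ℕ → Equiv.Perm ℕ := fun n =>
    { toFun := fun i => if i < n then i + 1 else if i = n then 0 else i
      invFun := fun j => if j = 0 then n else if j ≤ n then j - 1 else j
      left_inv := fun i => by
        simp only
        grind
      right_inv := fun j => by
        simp only
        grind }
  have := hlsc (fun i => p (i + 1)) (fun n => p ∘ σ n) (by
    intro x
    refine tendsto_const_nhds.congr' ?_
    filter_upwards [eventually_gt_atTop x] with n hn
    simp [σ, hn])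
  simpa [hsym] using this

/-- Fano-type inequality (Theorem 1): for a symmetric, concave, lower
semicontinuous `φ : P(X) → [0,∞]`, any pair `(X,Y)` with `P_X = Q` and list
decoding error at most `ε` satisfies `h_φ(X|Y) = E[φ(P_{X|Y})] ≤ φ(P₁)`, where
`P₁` is the Fano-type-1 distribution of `(Q, L, ε)`. -/
theorem stmt_7 {β : Type*} (φ : (ℕ → ℝ) → ENNReal)
    (hsym : ∀ (p : ℕ → ℝ) (σ : Equiv.Perm ℕ), φ (p ∘ σ) = φ p)
    (hconc : ∀ p r : ℕ → ℝ, IsPmf p → IsPmf r → ∀ l : ℝ, 0 ≤ l → l ≤ 1 →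
      ENNReal.ofReal l * φ p + ENNReal.ofReal (1 - l) * φ r ≤
        φ (fun x => l * p x + (1 - l) * r x))
    (hlsc : ∀ (P : ℕ → ℝ) (Pn : ℕ → ℕ → ℝ),
      (∀ x, Tendsto (fun n => Pn n x) atTop (𝓝 (P x))) →
      φ P ≤ liminf (fun n => φ (Pn n)) atTop)
    (Q d : ℕ → ℝ) (L : ℕ) (ε : ℝ)
    (hQ : IsPmf Q) (hd : IsDecRearr Q d) (hL : 1 ≤ L)
    (hε0 : 0 ≤ ε) (hε1 : ε ≤ 1 - topSum Q L)
    (q : β → ℝ) (W : β → ℕ → ℝ) (hq : IsPmf q) (hW : ∀ y, IsPmf (W y))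
    (hmarg : ∀ x, ∑' y, q y * W y x = Q x)
    (hPe : 1 - ∑' y, q y * topSum (W y) L ≤ ε) :
    ∑' y, ENNReal.ofReal (q y) * φ (W y) ≤ φ (fanoType1 d L ε) := by
  have hDs : ∀ k, Summable (fun y => q y * topSum (W y) k) := by
    intro k
    refine Summable.of_nonneg_of_le (fun y => mul_nonneg (hq.1 y) ?_) (fun y => ?_) hq.hasSum.summable
    · rw [← decR_prefix]
      exact Finset.sum_nonneg fun i _ => (hW y).decR_pmf.1 i
    · exact mul_le_of_le_one_right (hq.1 y) ((hW y).topSum_le_one k)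
  have hRs : ∀ i, Summable (fun y => q y * decR (W y) i) := by
    intro i
    refine ((hDs (i + 1)).sub (hDs i)).congr fun y => ?_
    simp only [decR]
    ring
  set R : ℕ → ℝ := fun i => ∑' y, q y * decR (W y) i with hR
  have hR0 : ∀ i, 0 ≤ R i := fun i =>
    tsum_nonneg fun y => mul_nonneg (hq.1 y) ((hW y).decR_pmf.1 i)
  have hRa : Antitone R := fun i j hij =>
    Summable.tsum_le_tsum (fun y => mul_le_mul_of_nonneg_left ((hW y).decR_anti hij) (hq.1 y))
      (hRs j) (hRs i)
  have hRp : ∀ k, ∑ i ∈ Finset.range k, R i = ∑' y, q y * topSum (W y) k := by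
    intro k
    simp only [hR]
    rw [← Summable.tsum_finsetSum fun i _ => hRs i]
    refine tsum_congr fun y => ?_
    rw [← Finset.mul_sum, decR_prefix]
  have hWs : ∀ x, Summable (fun y => q y * W y x) := by
    intro x
    refine Summable.of_nonneg_of_le (fun y => mul_nonneg (hq.1 y) ((hW y).1 x)) (fun y => ?_)
      hq.hasSum.summable
    have := (hW y).sum_le_one {x}
    rw [Finset.sum_singleton] at this
    exact mul_le_of_le_one_right (hq.1 y) this
  have hRQ : ∀ k, topSum Q k ≤ ∑ i ∈ Finset.range k, R i := by
    intro k
    rw [hRp]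
    refine topSum_le fun s hs => ?_
    simp only [← hmarg]
    rw [← Summable.tsum_finsetSum fun x _ => hWs x]
    refine Summable.tsum_le_tsum (fun y => ?_) (summable_sum fun x _ => hWs x) (hDs k)
    rw [← Finset.mul_sum, ← hs]
    exact mul_le_mul_of_nonneg_left ((hW y).le_topSum s) (hq.1 y)
  have hR1 : ∀ k, ∑ i ∈ Finset.range k, R i ≤ 1 := by
    intro k
    rw [hRp, ← hq.2]
    exact Summable.tsum_le_tsum
      (fun y => mul_le_of_le_one_right (hq.1 y) ((hW y).topSum_le_one k)) (hDs k) hq.hasSum.summable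
  have hRpmf : IsPmf R := isPmf_of_tendsto hR0
    (tendsto_of_tendsto_of_tendsto_of_le_of_le hQ.topSum_tendsto tendsto_const_nhds hRQ hR1)
  have step1 : ∑' y, ENNReal.ofReal (q y) * φ (W y) ≤
      ∑' y, ENNReal.ofReal (q y) * φ (decR (W y)) := by
    refine ENNReal.tsum_le_tsum fun y => ?_
    have := schur_top φ hsym hconc hlsc (decR (W y)) (W y) (hW y).decR_pmf (hW y) (hW y).decR_anti
      (fun k => (decR_prefix _ k).le)
    gcongr
  have step2 := jensen_inf φ hconc q hq (fun y => decR (W y)) (fun y => (hW y).decR_pmf) R hRpmf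
    (fun x => (hRs x).hasSum)
  obtain ⟨hd00, hda, hdS⟩ := hd
  have hd0 : ∀ i, 0 ≤ d i := by
    intro i
    rcases Nat.eq_zero_or_pos i with rfl | hi
    · exact hd00.ge
    · obtain ⟨m, rfl⟩ : ∃ m, i = m + 1 := ⟨i - 1, by omega⟩
      have h1 := hdS (m + 1)
      rw [Finset.sum_Icc_succ_top (by omega), hdS] at h1
      linarith [hQ.topSum_mono m]
  have hLe : 1 - ε ≤ ∑ i ∈ Finset.range L, R i := by
    rw [hRp]; linarith
  obtain ⟨_, hp, hpa, hpd⟩ := fano_main d L ε hL hε0 hd00 hd0 hda (topSum Q) hdS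
    hQ.topSum_le_one hQ.topSum_tendsto (by linarith) R hR0 hRa hRQ hLe
  have step3 := schur_prefix φ hsym hconc hlsc _ R hp hRpmf hpa hpd
  exact step1.trans (step2.trans (step3.trans (phi_shift φ hsym hlsc _)))
end
end

section
/- Let Q be a probability distribution on a countably infinite alphabet with H(Q) < ∞, and L ≥ 1 an integer. Then the function ε ↦ H(P₁(Q, L, ε)), where P₁(Q, L, ε) is the Fano-type-1 distribution, is concave on the interval [0, 1 − ∑_{x=1}^L Q↓(x)]. -/
noncomputable section
open scoped Classical

/-- Shannon entropy, valued in `[0,∞]`. -/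
def entE (p : ℕ → ℝ) : ENNReal := ∑' x, ENNReal.ofReal (Real.negMulLog (p x))


def psum (p : ℕ → ℝ) (n : ℕ) : ℝ := ∑ x ∈ Finset.range n, p x

lemma psum_succ (p : ℕ → ℝ) (n : ℕ) : psum p (n+1) = psum p n + p n := Finset.sum_range_succ _ _

lemma psum_const {p : ℕ → ℝ} {a b : ℕ} {v : ℝ} (h : ∀ x, a ≤ x → x < b → p x = v) :
    ∀ n, a ≤ n → n ≤ b → psum p n = psum p a + ((n:ℝ) - a) * v := by
  intro n hn
  induction n, hn using Nat.le_induction with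
  | base => intro _; ring
  | succ n hn ih =>
    intro hb
    rw [psum_succ, ih (by omega), h n hn (by omega)]
    push_cast; ring

lemma psum_ge {p : ℕ → ℝ} {a b : ℕ} {v : ℝ} (hab : a ≤ b) (h : ∀ x, a ≤ x → x < b → v ≤ p x) :
    psum p a + ((b:ℝ) - a) * v ≤ psum p b := by
  induction b, hab using Nat.le_induction with
  | base => simp
  | succ n hn ih =>
    rw [psum_succ]
    have := ih (fun x h1 h2 => h x h1 (by omega))
    have := h n hn (by omega)
    push_cast; linarith

lemma psum_le {p : ℕ → ℝ} {a b : ℕ} {v : ℝ} (hab : a ≤ b) (h : ∀ x, a ≤ x → x < b → p x ≤ v) :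
    psum p b ≤ psum p a + ((b:ℝ) - a) * v := by
  induction b, hab using Nat.le_induction with
  | base => simp
  | succ n hn ih =>
    rw [psum_succ]
    have := ih (fun x h1 h2 => h x h1 (by omega))
    have := h n hn (by omega)
    push_cast; linarith

lemma psum_congr {p q : ℕ → ℝ} {a b : ℕ} (hab : a ≤ b) (h0 : psum p a = psum q a)
    (h : ∀ x, a ≤ x → x < b → p x = q x) : psum p b = psum q b := by
  induction b, hab using Nat.le_induction with
  | base => exact h0
  | succ n hn ih =>
    rw [psum_succ, psum_succ, ih (fun x h1 h2 => h x h1 (by omega)), h n hn (by omega)]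

/-- concavity of partial sums of an antitone sequence -/
lemma psum_chord {m : ℕ → ℝ} (hm : Antitone m) {a b n : ℕ} {α v : ℝ} (han : a ≤ n) (hnb : n ≤ b)
    (h1 : α ≤ psum m a) (h2 : α + ((b:ℝ) - a) * v ≤ psum m b) :
    α + ((n:ℝ) - a) * v ≤ psum m n := by
  rcases le_total v (m n) with h | h
  · have := psum_ge (p := m) (v := v) han (fun x _ hx => h.trans (hm hx.le))
    linarith
  · have := psum_le (p := m) (v := v) hnb (fun x hx _ => (hm hx).trans h)
    linarith

/-- main comparison -/
lemma step_ineq {m p : ℝ} (hm : 0 ≤ m) (hp : 0 < p) :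
    Real.negMulLog m ≤ Real.negMulLog p + (-Real.log p - 1) * (m - p) := by
  rcases hm.eq_or_lt with rfl | hm
  · simp [Real.negMulLog]; nlinarith
  · have h := Real.log_le_sub_one_of_pos (div_pos hp hm)
    rw [Real.log_div hp.ne' hm.ne'] at h
    have h2 := mul_le_mul_of_nonneg_left h hm.le
    have : m * (p / m - 1) = p - m := by field_simp
    unfold Real.negMulLog
    nlinarith

lemma abel_ineq {m p : ℕ → ℝ} (hm : ∀ x, 0 ≤ m x) (hp : Antitone p)
    (hS : ∀ n, psum p n ≤ psum m n) (N : ℕ) : 0 < p N →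
    psum (fun x => Real.negMulLog (m x)) (N+1) ≤ psum (fun x => Real.negMulLog (p x)) (N+1)
      + (-Real.log (p N) - 1) * (psum m (N+1) - psum p (N+1)) := by
  induction N with
  | zero =>
    intro h
    simpa [psum] using step_ineq (hm 0) h
  | succ N ih =>
    intro h
    have hle := hp (Nat.le_succ N)
    have h' : 0 < p N := lt_of_lt_of_le h hle
    have i1 := ih h'
    have i2 := step_ineq (hm (N+1)) h
    have i3 := hS (N+1)
    have i4 := Real.log_le_log h hle
    rw [psum_succ _ (N+1), psum_succ _ (N+1), psum_succ m (N+1), psum_succ p (N+1)]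
    have := mul_le_mul_of_nonneg_right i4 (sub_nonneg.2 i3)
    simp only [Nat.succ_eq_add_one] at *
    nlinarith

lemma psum_le_one {p : ℕ → ℝ} (h0 : ∀ x, 0 ≤ p x) (h : HasSum p 1) (n : ℕ) : psum p n ≤ 1 :=
  sum_le_hasSum _ (fun x _ => h0 x) h

lemma le_one_of {p : ℕ → ℝ} (h0 : ∀ x, 0 ≤ p x) (h : HasSum p 1) (n : ℕ) : p n ≤ 1 :=
  le_hasSum h n (fun x _ => h0 x)

lemma entE_partial {m p : ℕ → ℝ} (hm : ∀ x, 0 ≤ m x) (hm1 : HasSum m 1) (hp : Antitone p)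
    (hp0 : ∀ x, 0 ≤ p x) (hp1 : HasSum p 1)
    (hS : ∀ n, psum p n ≤ psum m n) (N : ℕ) (hN : 0 < p N) :
    ∑ x ∈ Finset.range (N+1), ENNReal.ofReal (Real.negMulLog (m x)) ≤ entE p := by
  have hm2 := psum_le_one hm hm1
  have hab := abel_ineq hm hp hS N hN
  have hc : 0 ≤ -Real.log (p N) := by
    have := Real.log_nonpos (hp0 N) (le_one_of hp0 hp1 N); linarith
  have htail : HasSum (fun x => p (x + (N+1))) (1 - psum p (N+1)) := by
    exact (hasSum_nat_add_iff' (N+1)).2 hp1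
  have hsplit : entE p = ∑ x ∈ Finset.range (N+1), ENNReal.ofReal (Real.negMulLog (p x)) +
      ∑' x, ENNReal.ofReal (Real.negMulLog (p (x + (N+1)))) :=
    by
    unfold entE
    exact (Summable.sum_add_tsum_nat_add' (k := N+1) ENNReal.summable).symm
  have ht : ENNReal.ofReal (-Real.log (p N) * (1 - psum p (N+1))) ≤
      ∑' x, ENNReal.ofReal (Real.negMulLog (p (x + (N+1)))) := by
    have h1 := htail.mul_left (-Real.log (p N))
    rw [← h1.tsum_eq, ENNReal.ofReal_tsum_of_nonneg (fun x => mul_nonneg hc (hp0 _)) h1.summable]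
    refine ENNReal.tsum_le_tsum (fun x => ENNReal.ofReal_le_ofReal ?_)
    rcases (hp0 (x + (N+1))).eq_or_lt with h | h
    · rw [← h]; simp
    · have := Real.log_le_log h (hp (show N ≤ x + (N+1) by omega))
      unfold Real.negMulLog
      nlinarith
  have hnn : ∀ {q : ℕ → ℝ}, (∀ x, 0 ≤ q x) → HasSum q 1 → ∀ x, 0 ≤ Real.negMulLog (q x) :=
    fun h0 h1 x => Real.negMulLog_nonneg (h0 x) (le_one_of h0 h1 x)
  rw [hsplit, ← ENNReal.ofReal_sum_of_nonneg (fun x _ => hnn hm hm1 x),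
    ← ENNReal.ofReal_sum_of_nonneg (fun x _ => hnn hp0 hp1 x)]
  refine le_trans ?_ (add_le_add_right ht _)
  have h1 := psum_le_one hp0 hp1 (N+1)
  rw [← ENNReal.ofReal_add (Finset.sum_nonneg (fun x _ => hnn hp0 hp1 x))
    (mul_nonneg hc (by linarith))]
  refine ENNReal.ofReal_le_ofReal ?_
  refine le_trans hab ?_
  have h2 := hS (N+1)
  have h3 := hm2 (N+1)
  have : -Real.log (p N) * (psum m (N+1) - psum p (N+1)) ≤
    -Real.log (p N) * (1 - psum p (N+1)) := mul_le_mul_of_nonneg_left (by linarith) hc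
  change psum (fun x => Real.negMulLog (p x)) (N+1) + _ ≤
    psum (fun x => Real.negMulLog (p x)) (N+1) + _
  linarith

lemma entE_le {m p : ℕ → ℝ} (hm : ∀ x, 0 ≤ m x) (hm1 : HasSum m 1) (hp : Antitone p)
    (hp0 : ∀ x, 0 ≤ p x) (hp1 : HasSum p 1)
    (hS : ∀ n, psum p n ≤ psum m n) : entE m ≤ entE p := by
  have key := entE_partial hm hm1 hp hp0 hp1 hS
  have hsub : ∀ n, ∑ x ∈ Finset.range n, ENNReal.ofReal (Real.negMulLog (m x)) ≤ entE p := by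
    intro n
    induction n with
    | zero => simp
    | succ n ih =>
      rcases (hp0 n).eq_or_lt with h | h
      · have hz : ∀ x, n ≤ x → p x = 0 := fun x hx => le_antisymm (h ▸ hp hx) (hp0 x)
        have h1 : psum p n = 1 := by
          have : HasSum p (psum p n) := hasSum_sum_of_ne_finset_zero (s := Finset.range n)
            (fun b hb => hz b (by simpa using hb))
          exact this.unique hp1
        have h2 := hS n
        have h3 := psum_le_one hm hm1 (n+1)
        rw [psum_succ] at h3
        have h4 : m n = 0 := le_antisymm (by linarith) (hm n)
        rw [Finset.sum_range_succ, h4]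
        simpa using ih
      · exact key n h
  exact le_of_tendsto' (ENNReal.tendsto_nat_tsum _) hsub

/-- properties of the shifted Fano-type-1 distribution -/
structure Good (e : ℕ → ℝ) (L : ℕ) (ε : ℝ) (p : ℕ → ℝ) : Prop where
  anti : Antitone p
  nonneg : ∀ x, 0 ≤ p x
  sum1 : HasSum p 1
  maj : ∀ n, psum e n ≤ psum p n
  atL : psum p L = 1 - ε
  minim : ∀ m : ℕ → ℝ, Antitone m → (∀ x, 0 ≤ m x) → (∀ n, psum e n ≤ psum m n) →
    1 - ε ≤ psum m L → ∀ n, psum p n ≤ psum m n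

lemma good_fin {e p : ℕ → ℝ} {L j K : ℕ} {ε v w : ℝ} (he : Antitone e) (he0 : ∀ x, 0 ≤ e x)
    (he1 : HasSum e 1) (hjL : j ≤ L) (hLK : L ≤ K)
    (hv : psum e j + ((L:ℝ) - j) * v = 1 - ε) (hv1 : j < L → e j ≤ v)
    (hv2 : ∀ x, x < j → j < L → v ≤ e x)
    (hw : 1 - ε + ((K:ℝ) - L) * w = psum e K) (hw1 : ∀ x, x < K → L < K → w ≤ e x)
    (hw2 : L < K → e K ≤ w)
    (p1 : ∀ x, x < j → p x = e x) (p2 : ∀ x, j ≤ x → x < L → p x = v)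
    (p3 : ∀ x, L ≤ x → x < K → p x = w) (p4 : ∀ x, K ≤ x → p x = e x) : Good e L ε p := by
  have A1 : ∀ n, n ≤ j → psum p n = psum e n := fun n hn =>
    psum_congr (Nat.zero_le n) (by simp [psum]) (fun x _ hx => p1 x (by omega))
  have A2 : ∀ n, j ≤ n → n ≤ L → psum p n = psum e j + ((n:ℝ) - j) * v := fun n h1 h2 => by
    rw [psum_const p2 n h1 h2, A1 j le_rfl]
  have AL : psum p L = 1 - ε := by rw [A2 L hjL le_rfl, hv]
  have A3 : ∀ n, L ≤ n → n ≤ K → psum p n = 1 - ε + ((n:ℝ) - L) * w := fun n h1 h2 => by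
    rw [psum_const p3 n h1 h2, AL]
  have A4 : ∀ n, K ≤ n → psum p n = psum e n := fun n hn =>
    psum_congr hn (by rw [A3 K hLK le_rfl, hw]) (fun x h _ => p4 x h)
  have hnn : ∀ x, 0 ≤ p x := by
    intro x
    rcases lt_or_ge x j with h | h
    · rw [p1 x h]; exact he0 x
    rcases lt_or_ge x L with h' | h'
    · rw [p2 x h h']; exact (he0 j).trans (hv1 (by omega))
    rcases lt_or_ge x K with h'' | h''
    · rw [p3 x h' h'']; exact (he0 K).trans (hw2 (by omega))
    rw [p4 x h'']; exact he0 x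
  refine ⟨?_, hnn, ?_, ?_, AL, ?_⟩
  · refine antitone_nat_of_succ_le (fun n => ?_)
    have hn := he (Nat.le_succ n)
    simp only [Nat.succ_eq_add_one] at hn
    -- lower bound for p n by e when n < L, upper bound for p (n+1) by e when L ≤ n + 1
    have low : n < L → e n ≤ p n := by
      intro h
      rcases lt_or_ge n j with h' | h'
      · rw [p1 n h']
      · rw [p2 n h' h]; exact (he h').trans (hv1 (by omega))
    rcases lt_or_ge (n+1) j with h | h
    · rw [p1 _ h, p1 n (by omega)]; exact hn
    rcases lt_or_ge (n+1) L with h' | h'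
    · rw [p2 _ h h']
      rcases lt_or_ge n j with h2 | h2
      · rw [p1 n h2]; exact hv2 n h2 (by omega)
      · rw [p2 n h2 (by omega)]
    rcases lt_or_ge (n+1) K with h'' | h''
    · rw [p3 _ h' h'']
      rcases lt_or_ge n L with h2 | h2
      · exact (hw1 n (by omega) (by omega)).trans (low h2)
      · rw [p3 n h2 (by omega)]
    rw [p4 _ h'']
    rcases lt_or_ge n L with h2 | h2
    · exact hn.trans (low h2)
    rcases lt_or_ge n K with h3 | h3
    · rw [p3 n h2 h3, show n + 1 = K by omega]; exact hw2 (by omega)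
    · rw [p4 n h3]; exact hn
  · rw [hasSum_iff_tendsto_nat_of_nonneg hnn]
    refine (he1.tendsto_sum_nat).congr' ?_
    filter_upwards [Filter.eventually_ge_atTop K] with n hn
    exact (A4 n hn).symm
  · intro n
    rcases le_total n j with h | h
    · rw [A1 n h]
    rcases le_total n L with h' | h'
    · have := psum_le (p := e) (v := v) h (fun x h1 h2 => (he h1).trans (hv1 (by omega)))
      rw [A2 n h h']; exact this
    rcases le_total n K with h'' | h''
    · have := psum_ge (p := e) (v := w) h'' (fun x h1 h2 => hw1 x h2 (by omega))
      rw [A3 n h' h'']; linarith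
    · rw [A4 n h'']
  · intro m hm hm0 hmaj hmL n
    rcases le_total n j with h | h
    · rw [A1 n h]; exact hmaj n
    rcases le_total n L with h' | h'
    · rw [A2 n h h']; exact psum_chord hm h h' (hmaj j) (by linarith)
    rcases le_total n K with h'' | h''
    · rw [A3 n h' h'']; exact psum_chord hm h' h'' hmL (by rw [hw]; exact hmaj K)
    · rw [A4 n h'']; exact hmaj n

lemma good_top {e p : ℕ → ℝ} {L j : ℕ} {ε v : ℝ} (he : Antitone e) (he0 : ∀ x, 0 ≤ e x)
    (he1 : HasSum e 1) (hjL : j ≤ L) (hε : ε = 0)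
    (hv : psum e j + ((L:ℝ) - j) * v = 1 - ε) (hv1 : j < L → e j ≤ v)
    (hv2 : ∀ x, x < j → j < L → v ≤ e x)
    (p1 : ∀ x, x < j → p x = e x) (p2 : ∀ x, j ≤ x → x < L → p x = v)
    (p3 : ∀ x, L ≤ x → p x = 0) : Good e L ε p := by
  have A1 : ∀ n, n ≤ j → psum p n = psum e n := fun n hn =>
    psum_congr (Nat.zero_le n) (by simp [psum]) (fun x _ hx => p1 x (by omega))
  have A2 : ∀ n, j ≤ n → n ≤ L → psum p n = psum e j + ((n:ℝ) - j) * v := fun n h1 h2 => by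
    rw [psum_const p2 n h1 h2, A1 j le_rfl]
  have AL : psum p L = 1 - ε := by rw [A2 L hjL le_rfl, hv]
  have A3 : ∀ n, L ≤ n → psum p n = 1 := fun n h1 => by
    rw [psum_const (b := n) (fun x hx _ => p3 x hx) n h1 le_rfl, AL, hε]; ring
  have hnn : ∀ x, 0 ≤ p x := by
    intro x
    rcases lt_or_ge x j with h | h
    · rw [p1 x h]; exact he0 x
    rcases lt_or_ge x L with h' | h'
    · rw [p2 x h h']; exact (he0 j).trans (hv1 (by omega))
    rw [p3 x h']
  refine ⟨?_, hnn, ?_, ?_, AL, ?_⟩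
  · refine antitone_nat_of_succ_le (fun n => ?_)
    have hn := he (Nat.le_succ n)
    simp only [Nat.succ_eq_add_one] at hn
    rcases lt_or_ge (n+1) j with h | h
    · rw [p1 _ h, p1 n (by omega)]; exact hn
    rcases lt_or_ge (n+1) L with h' | h'
    · rw [p2 _ h h']
      rcases lt_or_ge n j with h2 | h2
      · rw [p1 n h2]; exact hv2 n h2 (by omega)
      · rw [p2 n h2 (by omega)]
    rw [p3 _ h']; exact hnn n
  · rw [hasSum_iff_tendsto_nat_of_nonneg hnn]
    refine tendsto_const_nhds.congr' ?_
    filter_upwards [Filter.eventually_ge_atTop L] with n hn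
    exact (A3 n hn).symm
  · intro n
    rcases le_total n j with h | h
    · rw [A1 n h]
    rcases le_total n L with h' | h'
    · have := psum_le (p := e) (v := v) h (fun x h1 h2 => (he h1).trans (hv1 (by omega)))
      rw [A2 n h h']; exact this
    rw [A3 n h']; exact psum_le_one he0 he1 n
  · intro m hm hm0 hmaj hmL n
    rcases le_total n j with h | h
    · rw [A1 n h]; exact hmaj n
    rcases le_total n L with h' | h'
    · rw [A2 n h h']; exact psum_chord hm h h' (hmaj j) (by linarith)
    rw [A3 n h']
    have := psum_ge (p := m) (v := 0) h' (fun x _ _ => hm0 x)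
    rw [hε] at hmL; linarith

lemma Icc_psum (d : ℕ → ℝ) (k : ℕ) :
    ∑ i ∈ Finset.Icc 1 k, d i = psum (fun x => d (x+1)) k := by
  induction k with
  | zero => simp [psum]
  | succ k ih => rw [Finset.sum_Icc_succ_top (by omega), ih, psum_succ]

lemma topSum_facts {Q : ℕ → ℝ} (hQ : IsPmf Q) :
    (∀ k, topSum Q k ≤ topSum Q (k+1)) ∧ (∀ k, topSum Q k ≤ 1) ∧
    ∀ k, ∑ x ∈ Finset.range k, Q x ≤ topSum Q k := by
  obtain ⟨h0, h1⟩ := hQ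
  have hs : Summable Q := by
    by_contra h
    rw [tsum_eq_zero_of_not_summable h] at h1; norm_num at h1
  have hh : HasSum Q 1 := h1 ▸ hs.hasSum
  have hub : ∀ s : Finset ℕ, ∑ x ∈ s, Q x ≤ 1 := fun s => sum_le_hasSum s (fun x _ => h0 x) hh
  have hbdd : ∀ k, BddAbove {t : ℝ | ∃ s : Finset ℕ, s.card = k ∧ t = ∑ x ∈ s, Q x} :=
    fun k => ⟨1, by rintro t ⟨s, _, rfl⟩; exact hub s⟩
  have hne : ∀ k, Set.Nonempty {t : ℝ | ∃ s : Finset ℕ, s.card = k ∧ t = ∑ x ∈ s, Q x} :=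
    fun k => ⟨_, Finset.range k, by simp, rfl⟩
  refine ⟨fun k => ?_, fun k => ?_, fun k => ?_⟩
  · refine csSup_le (hne k) ?_
    rintro t ⟨s, hs, rfl⟩
    obtain ⟨a, ha⟩ := Infinite.exists_notMem_finset s
    refine le_csSup_of_le (hbdd (k+1)) ⟨insert a s, by rw [Finset.card_insert_of_notMem ha, hs], rfl⟩ ?_
    rw [Finset.sum_insert ha]; linarith [h0 a]
  · refine csSup_le (hne k) ?_
    rintro t ⟨s, hs, rfl⟩; exact hub s
  · exact le_csSup (hbdd k) ⟨Finset.range k, by simp, rfl⟩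

lemma rearr_facts {Q d : ℕ → ℝ} (hQ : IsPmf Q) (hd : IsDecRearr Q d) :
    Antitone (fun x => d (x+1)) ∧ (∀ x, 0 ≤ d (x+1)) ∧ HasSum (fun x => d (x+1)) 1 ∧
    ∀ k, psum (fun x => d (x+1)) k = topSum Q k := by
  obtain ⟨t1, t2, t3⟩ := topSum_facts hQ
  obtain ⟨_, hd1, hd2⟩ := hd
  have hp : ∀ k, psum (fun x => d (x+1)) k = topSum Q k := fun k => by rw [← Icc_psum, hd2]
  have hnn : ∀ x, 0 ≤ d (x+1) := by
    intro x
    have := t1 x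
    rw [← hp, ← hp, psum_succ] at this
    linarith
  refine ⟨fun a b hab => hd1 _ _ (by omega) (by omega), hnn, ?_, hp⟩
  rw [hasSum_iff_tendsto_nat_of_nonneg hnn]
  have hs : Summable Q := by
    by_contra h
    have h1 := hQ.2
    rw [tsum_eq_zero_of_not_summable h] at h1; norm_num at h1
  have hh : HasSum Q 1 := hQ.2 ▸ hs.hasSum
  refine tendsto_of_tendsto_of_tendsto_of_le_of_le hh.tendsto_sum_nat tendsto_const_nhds
    (fun k => ?_) (fun k => ?_)
  · exact (t3 k).trans (hp k).ge
  · exact (hp k).le.trans (t2 k)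

lemma good_fano {d : ℕ → ℝ} {L : ℕ} {ε : ℝ} (he : Antitone (fun x => d (x+1)))
    (he0 : ∀ x, 0 ≤ d (x+1)) (he1 : HasSum (fun x => d (x+1)) 1) (hL : 1 ≤ L) (hε : 0 ≤ ε)
    (hεL : ε ≤ 1 - psum (fun x => d (x+1)) L) :
    0 < fanoJ d L ε ∧ Good (fun x => d (x+1)) L ε (fun x => fanoType1 d L ε (x+1)) := by
  set e := fun x => d (x+1) with hedef
  -- J
  have hmem : L + 1 ∈ {j : ℕ | 1 ≤ j ∧ d j < fanoV d L ε j} := by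
    refine ⟨by omega, ?_⟩
    have h1 := psum_le_one he0 he1 2
    have h2 : e L ≤ e 1 := he hL
    have h3 : e 1 ≤ e 0 := he (Nat.zero_le 1)
    have h4 : psum e 2 = e 0 + e 1 := by simp [psum, Finset.sum_range_succ]
    change e L < _
    simp only [fanoV, show ¬ (L + 1 ≤ L) by omega, if_false]
    linarith
  obtain ⟨hJ1, hJ2⟩ := Nat.sInf_mem ⟨_, hmem⟩
  have hJL : fanoJ d L ε ≤ L + 1 := Nat.sInf_le hmem
  have hJmin : ∀ i, 1 ≤ i → i < fanoJ d L ε → fanoV d L ε i ≤ d i := by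
    intro i hi hlt
    by_contra h
    exact Nat.notMem_of_lt_sInf hlt ⟨hi, not_le.1 h⟩
  change 1 ≤ fanoJ d L ε at hJ1
  change d (fanoJ d L ε) < fanoV d L ε (fanoJ d L ε) at hJ2
  refine ⟨hJ1, ?_⟩
  obtain ⟨j, hj⟩ : ∃ j, fanoJ d L ε = j + 1 := ⟨fanoJ d L ε - 1, by omega⟩
  rw [hj] at hJ2 hJL hJmin
  have hjL : j ≤ L := by omega
  have hV : ∀ i, i < L → ((L:ℝ) - i) * fanoV d L ε (i+1) = 1 - ε - psum e i := by
    intro i hi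
    have : ((L:ℝ) - i) ≠ 0 := by
      have : (i:ℝ) < L := by exact_mod_cast hi
      linarith
    simp only [fanoV, show i + 1 ≤ L from hi, if_true, Nat.add_sub_cancel, Icc_psum]
    push_cast
    rw [show (L:ℝ) - (i + 1) + 1 = L - i by ring]
    field_simp
    rfl
  set v := fanoV d L ε (j+1) with hvdef
  have hv : psum e j + ((L:ℝ) - j) * v = 1 - ε := by
    rcases hjL.lt_or_eq with h | h
    · rw [hV j h]; ring
    · have h1 := hV (L-1) (by omega)
      have h2 := hJmin L hL (by omega)
      rw [Nat.sub_add_cancel hL, Nat.cast_sub hL] at h1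
      have h3 := psum_succ e (L-1)
      have h4 : e (L-1) = d L := by simp [hedef, Nat.sub_add_cancel hL]
      rw [Nat.sub_add_cancel hL, h4] at h3
      push_cast at h1
      rw [h]
      linarith
  have hv1 : j < L → e j ≤ v := fun _ => hJ2.le
  have hv2 : ∀ x, x < j → j < L → v ≤ e x := by
    intro x hx hjl
    obtain ⟨i, rfl⟩ : ∃ i, j = i + 1 := ⟨j - 1, by omega⟩
    have h1 : fanoV d L ε (i+1) ≤ e i := hJmin (i+1) (by omega) (by omega)
    have h2 := hV i (by omega)
    have h3 := hV (i+1) hjl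
    rw [psum_succ] at h3
    push_cast at h3
    have h5 : ((i:ℝ) + 1) < L := by exact_mod_cast hjl
    have h6 : e i ≤ e x := he (by omega)
    have h7 : ((L:ℝ) - (i+1)) * v ≤ ((L:ℝ) - (i+1)) * e i := by
      rw [h3]
      have := mul_le_mul_of_nonneg_left h1 (show (0:ℝ) ≤ L - i by linarith)
      linarith
    exact (le_of_mul_le_mul_left h7 (by linarith)).trans h6
  have p1 : ∀ x, x < j → fanoType1 d L ε (x+1) = e x := by
    intro x hx
    simp [fanoType1, hj, hx, hedef]
  have p2 : ∀ x, j ≤ x → x < L → fanoType1 d L ε (x+1) = v := by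
    intro x hx hx'
    rw [fanoType1, hj, if_neg (by omega), if_pos (by omega)]
  -- K
  have hW : ∀ n, L < n → ((n:ℝ) - L) * fanoW d L ε n = psum e n - (1 - ε) := by
    intro n hn
    have : ((n:ℝ) - L) ≠ 0 := by
      have : (L:ℝ) < n := by exact_mod_cast hn
      linarith
    simp only [fanoW, show ¬ (n = L) by omega, if_false, Icc_psum]
    field_simp
    rfl
  have hLin : (L : ℕ∞) ∈ {k : ℕ∞ | ∃ n : ℕ, k = (n : ℕ∞) ∧ L ≤ n ∧ fanoW d L ε n < d n} := by
    refine ⟨L, rfl, le_rfl, ?_⟩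
    have : 0 ≤ d L := by have := he0 (L-1); rwa [Nat.sub_add_cancel hL] at this
    simp only [fanoW, if_true]; linarith
  by_cases hK : fanoK d L ε = ⊤
  · refine good_top (v := v) he he0 he1 hjL ?_ hv hv1 hv2 p1 p2 ?_
    · refine le_antisymm ?_ hε
      have hfreq : ∀ N : ℕ, ∃ n : ℕ, N < n ∧ L ≤ n ∧ fanoW d L ε n < d n := by
        intro N
        have : (N : ℕ∞) < fanoK d L ε := by rw [hK]; exact ENat.natCast_lt_top N
        obtain ⟨_, ⟨n, rfl, h1, h2⟩, h3⟩ := lt_sSup_iff.1 this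
        exact ⟨n, by exact_mod_cast h3, h1, h2⟩
      have hez : Filter.Tendsto e Filter.atTop (nhds 0) := he1.summable.tendsto_atTop_zero
      have hm : ∀ m, L ≤ m → psum e m ≤ 1 - ε := by
        intro m hm
        have hlim : Filter.Tendsto (fun n => 1 - ε + ((m:ℝ) - L) * e n) Filter.atTop
            (nhds (1 - ε + ((m:ℝ) - L) * 0)) := (hez.const_mul _).const_add _
        have hge : ∀ N, psum e m ≤ 1 - ε + ((m:ℝ) - L) * e N := by
          intro N
          obtain ⟨n, h1, h2, h3⟩ := hfreq (max N m)
          have hn1 : N < n := lt_of_le_of_lt (le_max_left _ _) h1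
          have hn2 : m < n := lt_of_le_of_lt (le_max_right _ _) h1
          obtain ⟨k, rfl⟩ : ∃ k, n = k + 1 := ⟨n - 1, by omega⟩
          have h4 := hW (k+1) (by omega)
          have h5 : (0:ℝ) < ((k+1 : ℕ):ℝ) - L := by
            have : (L:ℝ) < ((k+1 : ℕ):ℝ) := by exact_mod_cast (by omega : L < k + 1)
            linarith
          have h6 := mul_lt_mul_of_pos_left h3 h5
          have h7 := psum_ge (p := e) (v := e k) hn2.le (fun x _ hx => he (by omega))
          have h8 : e k ≤ e N := he (by omega)
          have h9 : (0:ℝ) ≤ (m:ℝ) - L := by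
            have : (L:ℝ) ≤ m := by exact_mod_cast hm
            linarith
          have h10 := mul_le_mul_of_nonneg_left h8 h9
          change ((k+1 : ℕ) - L : ℝ) * _ < ((k+1 : ℕ) - L : ℝ) * e k at h6
          linarith
        have := ge_of_tendsto' hlim hge
        linarith
      have : (1:ℝ) ≤ 1 - ε := by
        refine le_of_tendsto he1.tendsto_sum_nat ?_
        filter_upwards [Filter.eventually_ge_atTop L] with m h
        exact hm m h
      linarith
    · intro x hx
      rw [fanoType1, hj, if_neg (by omega), if_neg (by omega), hK, if_pos le_top, if_pos rfl]
  · obtain ⟨K, hKeq⟩ := ENat.ne_top_iff_exists.1 hK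
    have hKeq' : fanoK d L ε = (K : ℕ∞) := hKeq.symm
    have hLK : L ≤ K := by
      have : (L : ℕ∞) ≤ fanoK d L ε := le_sSup hLin
      rw [hKeq'] at this; exact_mod_cast this
    have hKmem : L < K → fanoW d L ε K < d K := by
      intro hlt
      have : ((K - 1 : ℕ) : ℕ∞) < fanoK d L ε := by
        rw [hKeq']; exact_mod_cast (by omega : K - 1 < K)
      obtain ⟨_, ⟨n, rfl, h1, h2⟩, h3⟩ := lt_sSup_iff.1 this
      have h4 : (n : ℕ∞) ≤ fanoK d L ε := le_sSup ⟨n, rfl, h1, h2⟩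
      rw [hKeq'] at h4
      have h4' : n ≤ K := by exact_mod_cast h4
      have h3' : K - 1 < n := by exact_mod_cast h3
      rwa [show K = n by omega]
    have hKnext : e K ≤ fanoW d L ε (K+1) := by
      by_contra h
      have h4 : ((K+1 : ℕ) : ℕ∞) ≤ fanoK d L ε :=
        le_sSup ⟨K+1, rfl, by omega, not_le.1 h⟩
      rw [hKeq'] at h4
      have : K + 1 ≤ K := by exact_mod_cast h4
      omega
    have hKL : (L:ℝ) ≤ K := by exact_mod_cast hLK
    have hnext : ((K:ℝ) - L) * e K ≤ psum e K - (1 - ε) := by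
      have h1 := hW (K+1) (by omega)
      rw [psum_succ] at h1
      push_cast at h1
      have := mul_le_mul_of_nonneg_left hKnext (show (0:ℝ) ≤ K + 1 - L by linarith)
      linarith
    refine good_fin (v := v) (K := K) (w := fanoW d L ε K) he he0 he1 hjL hLK hv hv1 hv2
      ?_ ?_ ?_ p1 p2 ?_ ?_
    · rcases hLK.lt_or_eq with h | h
      · rw [hW K h]; ring
      · subst h
        simp only [sub_self, zero_mul] at hnext ⊢
        linarith
    · intro x hx hlt
      obtain ⟨k, rfl⟩ : ∃ k, K = k + 1 := ⟨K - 1, by omega⟩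
      exact (hKmem hlt).le.trans (he (show x ≤ k by omega))
    · intro hlt
      rw [← hW K hlt] at hnext
      refine le_of_mul_le_mul_left hnext ?_
      have : (L:ℝ) < K := by exact_mod_cast hlt
      linarith
    · intro x hx hx'
      rw [fanoType1, hj, if_neg (by omega), if_neg (by omega), hKeq',
        if_pos (by exact_mod_cast hx'), if_neg (ENat.natCast_ne_top K)]
      simp
    · intro x hx
      rw [fanoType1, hj, if_neg (by omega), if_neg (by omega), hKeq', if_neg]
      intro h
      have : x + 1 ≤ K := by exact_mod_cast h
      omega

lemma entE_shift {p : ℕ → ℝ} (h : p 0 = 0) : entE p = entE (fun x => p (x+1)) := by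
  unfold entE
  rw [← Summable.sum_add_tsum_nat_add' (k := 1) ENNReal.summable]
  simp [h]

/-- If `H(Q) < ∞`, the map `ε ↦ H(P₁(Q,L,ε))` is concave on
`[0, 1 − ∑_{x=1}^L Q↓(x)]`, where `P₁(Q,L,ε)` is the Fano-type-1
distribution. -/
theorem stmt_13 (Q d : ℕ → ℝ) (L : ℕ)
    (hQ : IsPmf Q) (hd : IsDecRearr Q d) (hL : 1 ≤ L) (hH : entE Q ≠ ⊤) :
    ∀ ε₁ ε₂ l : ℝ, 0 ≤ ε₁ → ε₁ ≤ 1 - topSum Q L → 0 ≤ ε₂ → ε₂ ≤ 1 - topSum Q L →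
      0 ≤ l → l ≤ 1 →
      ENNReal.ofReal l * entE (fanoType1 d L ε₁) +
        ENNReal.ofReal (1 - l) * entE (fanoType1 d L ε₂) ≤
      entE (fanoType1 d L (l * ε₁ + (1 - l) * ε₂)) := by
  intro ε₁ ε₂ l h1 h1' h2 h2' hl hl'
  obtain ⟨he, he0, he1, hp⟩ := rearr_facts hQ hd
  rw [← hp] at h1' h2'
  have hl1 : 0 ≤ 1 - l := by linarith
  have h3 : 0 ≤ l * ε₁ + (1 - l) * ε₂ := by positivity
  have h3' : l * ε₁ + (1 - l) * ε₂ ≤ 1 - psum (fun x => d (x+1)) L := by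
    have a := mul_le_mul_of_nonneg_left h1' hl
    have b := mul_le_mul_of_nonneg_left h2' hl1
    linarith
  obtain ⟨j1, g1⟩ := good_fano he he0 he1 hL h1 h1'
  obtain ⟨j2, g2⟩ := good_fano he he0 he1 hL h2 h2'
  obtain ⟨j3, g3⟩ := good_fano he he0 he1 hL h3 h3'
  have hz : ∀ ε, 0 < fanoJ d L ε → fanoType1 d L ε 0 = 0 := by
    intro ε h
    rw [fanoType1, if_pos h, hd.1]
  rw [entE_shift (hz _ j1), entE_shift (hz _ j2), entE_shift (hz _ j3)]
  generalize (fun x => fanoType1 d L ε₁ (x+1)) = q1 at g1 ⊢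
  generalize (fun x => fanoType1 d L ε₂ (x+1)) = q2 at g2 ⊢
  generalize (fun x => fanoType1 d L (l * ε₁ + (1 - l) * ε₂) (x+1)) = q3 at g3 ⊢
  have hpm : ∀ n, psum (fun x => l * q1 x + (1 - l) * q2 x) n
      = l * psum q1 n + (1 - l) * psum q2 n := by
    intro n
    simp [psum, Finset.sum_add_distrib, Finset.mul_sum]
  have hm0 : ∀ x, 0 ≤ l * q1 x + (1 - l) * q2 x := fun x =>
    add_nonneg (mul_nonneg hl (g1.nonneg x)) (mul_nonneg hl1 (g2.nonneg x))
  have hm1 : HasSum (fun x => l * q1 x + (1 - l) * q2 x) 1 := by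
    have := (g1.sum1.mul_left l).add (g2.sum1.mul_left (1 - l))
    rwa [show l * 1 + (1 - l) * 1 = (1:ℝ) by ring] at this
  have hma : Antitone (fun x => l * q1 x + (1 - l) * q2 x) := fun a b hab =>
    add_le_add (mul_le_mul_of_nonneg_left (g1.anti hab) hl)
      (mul_le_mul_of_nonneg_left (g2.anti hab) hl1)
  refine le_trans ?_ (entE_le hm0 hm1 g3.anti g3.nonneg g3.sum1
    (g3.minim _ hma hm0 (fun n => ?_) ?_))
  · unfold entE
    rw [← ENNReal.tsum_mul_left, ← ENNReal.tsum_mul_left, ← ENNReal.tsum_add]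
    refine ENNReal.tsum_le_tsum (fun x => ?_)
    have a1 := Real.negMulLog_nonneg (g1.nonneg x) (le_one_of g1.nonneg g1.sum1 x)
    have a2 := Real.negMulLog_nonneg (g2.nonneg x) (le_one_of g2.nonneg g2.sum1 x)
    rw [← ENNReal.ofReal_mul hl, ← ENNReal.ofReal_mul hl1,
      ← ENNReal.ofReal_add (mul_nonneg hl a1) (mul_nonneg hl1 a2)]
    refine ENNReal.ofReal_le_ofReal ?_
    have := Real.concaveOn_negMulLog.2 (g1.nonneg x) (g2.nonneg x) hl hl1 (by ring)
    simpa using this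
  · rw [hpm]
    have a := mul_le_mul_of_nonneg_left (g1.maj n) hl
    have b := mul_le_mul_of_nonneg_left (g2.maj n) hl1
    linarith
  · rw [hpm, g1.atL, g2.atL]
    linarith
end
end
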